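/- Let S be a self-adjoint regular operator and T a symmetric regular operator on a Hilbert B-module E. Assume for every μ ∈ ℝ∖{0}: (1) (S+iμ)^{-1}Dom(T) ⊆ Dom(S) ∩ Dom(T) ∩ Dom(ST) and the operator (ST+TS)(S+iμ)^{-1} extends to a bounded adjointable operator on E; (2) (S+iμ)^{-1}Dom(T*) ⊆ Dom(S) ∩ Dom(T*) ∩ Dom(ST*) and (ST*+T*S)(S+iμ)^{-1} extends to a bounded adjointable operator on E. Then S+T is a closed regular symmetric operator with domain Dom(S) ∩ Dom(T), and (S+T)* is the closure of S+T* equipped with the domain Dom(S) ∩ Dom(T*). -/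

import Mathlib

/-!
Core framework for unbounded KK-theory following Deeley–Goffeng–Mesland,
"The bordism group of unbounded KK-cycles".

We model Hilbert C*-modules over a C*-algebra `B` as bundled structures, and
(unbounded) regular operators via their graphs.
-/

noncomputable section

namespace UKK

open Complex

/-- A (right) Hilbert C*-module over a C*-algebra `B`, bundled together with its
`B`-valued inner product and right `B`-action. -/
structure HilbMod (B : Type) [NonUnitalCStarAlgebra B] : Type 1 where
  carrier : Type
  [nacg : NormedAddCommGroup carrier]
  [nsc : NormedSpace ℂ carrier]
  [cs : CompleteSpace carrier]
  /-- the right action of `B` -/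
  smulB : carrier → B → carrier
  /-- the `B`-valued inner product -/
  inner : carrier → carrier → B
  inner_add_right : ∀ x y z : carrier, inner x (y + z) = inner x y + inner x z
  inner_smul_right : ∀ (x : carrier) (c : ℂ) (y : carrier), inner x (c • y) = c • inner x y
  inner_smulB_right : ∀ (x y : carrier) (b : B), inner x (smulB y b) = inner x y * b
  star_inner : ∀ x y : carrier, star (inner x y) = inner y x
  norm_sq_eq : ∀ x : carrier, ‖x‖ ^ 2 = ‖inner x x‖
  norm_inner_le : ∀ x y : carrier, ‖inner x y‖ ≤ ‖x‖ * ‖y‖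
  add_smulB : ∀ (x y : carrier) (b : B), smulB (x + y) b = smulB x b + smulB y b
  smulB_add : ∀ (x : carrier) (b₁ b₂ : B), smulB x (b₁ + b₂) = smulB x b₁ + smulB x b₂
  smulB_mul : ∀ (x : carrier) (b₁ b₂ : B), smulB x (b₁ * b₂) = smulB (smulB x b₁) b₂
  smul_smulB : ∀ (c : ℂ) (x : carrier) (b : B), smulB (c • x) b = c • smulB x b

attribute [instance] HilbMod.nacg HilbMod.nsc HilbMod.cs

variable {B : Type} [NonUnitalCStarAlgebra B]

/-- A bounded adjointable (`B`-linear) operator between Hilbert `B`-modules. -/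
structure Adj (E F : HilbMod B) where
  toFun : E.carrier →L[ℂ] F.carrier
  adjFun : F.carrier →L[ℂ] E.carrier
  map_smulB : ∀ x b, toFun (E.smulB x b) = F.smulB (toFun x) b
  adj_map_smulB : ∀ y b, adjFun (F.smulB y b) = E.smulB (adjFun y) b
  inner_adj : ∀ x y, F.inner (toFun x) y = E.inner x (adjFun y)

/-- The graph of a (possibly unbounded) `B`-linear operator `E ⇢ F`:
a `ℂ`-submodule of `E × F` which is `B`-invariant and single-valued. -/
def IsOperatorGraph (E F : HilbMod B) (G : Set (E.carrier × F.carrier)) : Prop :=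
  (∃ S : Submodule ℂ (E.carrier × F.carrier), (S : Set (E.carrier × F.carrier)) = G) ∧
  (∀ p ∈ G, ∀ b : B, (E.smulB p.1 b, F.smulB p.2 b) ∈ G) ∧
  (∀ y : F.carrier, ((0 : E.carrier), y) ∈ G → y = 0)

/-- The domain of an operator graph. -/
def gdom {E F : HilbMod B} (G : Set (E.carrier × F.carrier)) : Set E.carrier :=
  Prod.fst '' G

/-- The graph of the adjoint operator: `(y, z) ∈ G(D*)` iff
`⟪Dx, y⟫ = ⟪x, z⟫` for all `(x, Dx) ∈ G(D)`. -/
def adjointGraph (E F : HilbMod B) (G : Set (E.carrier × F.carrier)) :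
    Set (F.carrier × E.carrier) :=
  {q | ∀ p ∈ G, F.inner p.2 q.1 = E.inner p.1 q.2}

/-- A semi-regular operator: a closed densely defined operator graph with densely
defined adjoint. -/
def IsSemiRegular (E F : HilbMod B) (G : Set (E.carrier × F.carrier)) : Prop :=
  IsOperatorGraph E F G ∧ IsClosed G ∧ Dense (gdom G) ∧ Dense (gdom (adjointGraph E F G))

/-- A regular operator: a semi-regular operator such that `1 + D*D` has dense range. -/
def IsRegular (E F : HilbMod B) (G : Set (E.carrier × F.carrier)) : Prop :=
  IsSemiRegular E F G ∧
    Dense {w : E.carrier | ∃ x y z, (x, y) ∈ G ∧ (y, z) ∈ adjointGraph E F G ∧ w = x + z}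

/-- A symmetric operator: `D ⊆ D*`. -/
def IsSymmetricGraph (E : HilbMod B) (G : Set (E.carrier × E.carrier)) : Prop :=
  G ⊆ adjointGraph E E G

/-- A self-adjoint operator: `D = D*`. -/
def IsSelfAdjointGraph (E : HilbMod B) (G : Set (E.carrier × E.carrier)) : Prop :=
  adjointGraph E E G = G

/-- The sum of two operators, with domain the intersection of the domains. -/
def sumGraph (E F : HilbMod B) (G₁ G₂ : Set (E.carrier × F.carrier)) :
    Set (E.carrier × F.carrier) :=
  {p | ∃ y₁ y₂, (p.1, y₁) ∈ G₁ ∧ (p.1, y₂) ∈ G₂ ∧ p.2 = y₁ + y₂}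

/-- Finite rank operators `z ↦ ∑ vᵢ · ⟪wᵢ, z⟫`. -/
def finiteRankSet (E F : HilbMod B) : Set (E.carrier →L[ℂ] F.carrier) :=
  {S | ∃ (n : ℕ) (v : Fin n → F.carrier) (w : Fin n → E.carrier),
    ∀ z, S z = ∑ i, F.smulB (v i) (E.inner (w i) z)}

/-- `B`-compact operators: norm limits of finite rank operators. -/
def IsCompactOp (E F : HilbMod B) (T : E.carrier →L[ℂ] F.carrier) : Prop :=
  T ∈ closure (finiteRankSet E F)

/-- `C` is a bounded adjointable extension of the commutator `[D, T]`,
and `T` preserves the domain of `D`.  This says `T ∈ Lip(D)` with commutator `C`. -/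
def IsLipFor (E : HilbMod B) (G : Set (E.carrier × E.carrier)) (T C : Adj E E) : Prop :=
  ∀ p ∈ G, ∃ y', (T.toFun p.1, y') ∈ G ∧ C.toFun p.1 = y' - T.toFun p.2

/-- Membership in the Lipschitz algebra `Lip(D)` of the operator with graph `G`. -/
def MemLip (E : HilbMod B) (G : Set (E.carrier × E.carrier)) (T : Adj E E) : Prop :=
  ∃ C : Adj E E, IsLipFor E G T C

/-- A *-representation of a C*-algebra `A` by adjointable operators on a
Hilbert `B`-module. -/
structure RepOn (A : Type) [NonUnitalCStarAlgebra A] {B : Type} [NonUnitalCStarAlgebra B]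
    (E : HilbMod B) where
  π : A → Adj E E
  π_add : ∀ a₁ a₂ x, (π (a₁ + a₂)).toFun x = (π a₁).toFun x + (π a₂).toFun x
  π_mul : ∀ a₁ a₂ x, (π (a₁ * a₂)).toFun x = (π a₁).toFun ((π a₂).toFun x)
  π_smul : ∀ (c : ℂ) a x, (π (c • a)).toFun x = c • (π a).toFun x
  π_star : ∀ a, (π (star a)).toFun = (π a).adjFun

/-- A grading operator (a self-adjoint adjointable involution) on a Hilbert module. -/
structure GradingOf (E : HilbMod B) where
  γ : Adj E E
  invol : ∀ x, γ.toFun (γ.toFun x) = x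
  selfadj : γ.adjFun = γ.toFun

/-- A dense *-subalgebra `𝒜 ⊆ A`, equipped with a (locally convex) topology finer
than the C*-topology. -/
structure DenseSub (A : Type) [NonUnitalCStarAlgebra A] where
  alg : NonUnitalStarSubalgebra ℂ A
  dense : Dense (alg : Set A)
  top : TopologicalSpace alg
  cont : @Continuous _ _ top _ (Subtype.val : alg → A)

variable {A : Type} [NonUnitalCStarAlgebra A]

/-- The conditions of an `(𝒜,B)`-chain: a regular operator `D` (odd when graded),
with `A` acting by even operators, such that the representation restricts to a
continuous homomorphism `𝒜 → Lip(D)`. -/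
def IsChainOn (𝓐 : DenseSub A) (E : HilbMod B) (ρ : RepOn A E) (gr : Option (GradingOf E))
    (G : Set (E.carrier × E.carrier)) : Prop :=
  IsRegular E E G ∧
  (∀ g, gr = some g →
    (∀ (a : A) x, g.γ.toFun ((ρ.π a).toFun x) = (ρ.π a).toFun (g.γ.toFun x)) ∧
    (∀ p ∈ G, (g.γ.toFun p.1, -(g.γ.toFun p.2)) ∈ G)) ∧
  (∃ Λ : 𝓐.alg → Adj E E,
    (∀ a : 𝓐.alg, IsLipFor E G (ρ.π (a : A)) (Λ a)) ∧
    @Continuous _ _ 𝓐.top _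
      (fun a : 𝓐.alg => (((ρ.π (a : A)).toFun : E.carrier →L[ℂ] E.carrier), (Λ a).toFun)))

/-- Local compactness of the resolvents `π(a)(D ± i)⁻¹`. -/
def HasLocallyCompactResolvent (E : HilbMod B) (ρ : RepOn A E)
    (G : Set (E.carrier × E.carrier)) : Prop :=
  ∀ (a : A) (s : ℝ), s = 1 ∨ s = -1 →
    ∃ C : E.carrier →L[ℂ] E.carrier, IsCompactOp E E C ∧
      ∀ p ∈ G, C (p.2 + ((s : ℂ) * Complex.I) • p.1) = (ρ.π a).toFun p.1

/-- The conditions of a closed `(𝒜,B)`-cycle. -/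
def IsCycleOn (𝓐 : DenseSub A) (E : HilbMod B) (ρ : RepOn A E) (gr : Option (GradingOf E))
    (G : Set (E.carrier × E.carrier)) : Prop :=
  IsChainOn 𝓐 E ρ gr G ∧ IsSelfAdjointGraph E G ∧ HasLocallyCompactResolvent E ρ G

/-- The conditions of a symmetric `(𝒜,B)`-chain. -/
def IsSymmetricChainOn (𝓐 : DenseSub A) (E : HilbMod B) (ρ : RepOn A E)
    (gr : Option (GradingOf E)) (G : Set (E.carrier × E.carrier)) : Prop :=
  IsChainOn 𝓐 E ρ gr G ∧ IsSymmetricGraph E G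

/-- A closed `(𝒜,B)`-cycle. -/
structure KKCycle (𝓐 : DenseSub A) (B : Type) [NonUnitalCStarAlgebra B] : Type 1 where
  E : HilbMod B
  ρ : RepOn A E
  gr : Option (GradingOf E)
  G : Set (E.carrier × E.carrier)
  is : IsCycleOn 𝓐 E ρ gr G

/-- A symmetric `(𝒜,B)`-chain. -/
structure SChain (𝓐 : DenseSub A) (B : Type) [NonUnitalCStarAlgebra B] : Type 1 where
  E : HilbMod B
  ρ : RepOn A E
  gr : Option (GradingOf E)
  G : Set (E.carrier × E.carrier)
  is : IsSymmetricChainOn 𝓐 E ρ gr G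

/-- A unitary isomorphism of Hilbert `B`-modules. -/
structure UIso (E F : HilbMod B) where
  u : Adj E F
  linv : ∀ x, u.adjFun (u.toFun x) = x
  rinv : ∀ y, u.toFun (u.adjFun y) = y

/-- A decomposition of `E` as the direct sum of `E₁` and `E₂`, given by a pair of
isometric embeddings with orthogonal ranges and dense total range. -/
structure SumDecomp (E E₁ E₂ : HilbMod B) where
  j₁ : Adj E₁ E
  j₂ : Adj E₂ E
  isom₁ : ∀ x y, E.inner (j₁.toFun x) (j₁.toFun y) = E₁.inner x y
  isom₂ : ∀ x y, E.inner (j₂.toFun x) (j₂.toFun y) = E₂.inner x y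
  orth : ∀ x y, E.inner (j₁.toFun x) (j₂.toFun y) = 0
  total : Dense {z : E.carrier | ∃ x y, z = j₁.toFun x + j₂.toFun y}

/-- `c` is (isomorphic to) the direct sum of the cycles `c₁` and `c₂`. -/
def IsSumOf {𝓐 : DenseSub A} (c c₁ c₂ : KKCycle 𝓐 B) : Prop :=
  ∃ d : SumDecomp c.E c₁.E c₂.E,
    (∀ (a : A) x, (c.ρ.π a).toFun (d.j₁.toFun x) = d.j₁.toFun ((c₁.ρ.π a).toFun x)) ∧
    (∀ (a : A) x, (c.ρ.π a).toFun (d.j₂.toFun x) = d.j₂.toFun ((c₂.ρ.π a).toFun x)) ∧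
    (c.G = {pr | ∃ p₁ ∈ c₁.G, ∃ p₂ ∈ c₂.G,
        pr = (d.j₁.toFun p₁.1 + d.j₂.toFun p₂.1, d.j₁.toFun p₁.2 + d.j₂.toFun p₂.2)}) ∧
    (c.gr.isSome = c₁.gr.isSome ∧ c.gr.isSome = c₂.gr.isSome) ∧
    (∀ g g₁, c.gr = some g → c₁.gr = some g₁ →
      ∀ x, g.γ.toFun (d.j₁.toFun x) = d.j₁.toFun (g₁.γ.toFun x)) ∧
    (∀ g g₂, c.gr = some g → c₂.gr = some g₂ →
      ∀ x, g.γ.toFun (d.j₂.toFun x) = d.j₂.toFun (g₂.γ.toFun x))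

/-- `c'` is (isomorphic to) the inverse `-c` of the cycle `c`: for odd cycles the
sign of the operator is reversed, for even cycles the grading is reversed. -/
def IsNegOf {𝓐 : DenseSub A} (c' c : KKCycle 𝓐 B) : Prop :=
  ∃ u : UIso c.E c'.E,
    (∀ (a : A) x, u.u.toFun ((c.ρ.π a).toFun x) = (c'.ρ.π a).toFun (u.u.toFun x)) ∧
    ((c.gr = none ∧ c'.gr = none ∧
        ∀ pr : c.E.carrier × c.E.carrier,
          pr ∈ c.G ↔ (u.u.toFun pr.1, -u.u.toFun pr.2) ∈ c'.G) ∨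
     (∃ g g', c.gr = some g ∧ c'.gr = some g' ∧
        (∀ pr : c.E.carrier × c.E.carrier,
          pr ∈ c.G ↔ (u.u.toFun pr.1, u.u.toFun pr.2) ∈ c'.G) ∧
        ∀ x, u.u.toFun (g.γ.toFun x) = -(g'.γ.toFun (u.u.toFun x))))

/-- Isomorphism of cycles. -/
def CycleIso {𝓐 : DenseSub A} (c c' : KKCycle 𝓐 B) : Prop :=
  ∃ u : UIso c.E c'.E,
    (∀ (a : A) x, u.u.toFun ((c.ρ.π a).toFun x) = (c'.ρ.π a).toFun (u.u.toFun x)) ∧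
    (∀ pr : c.E.carrier × c.E.carrier,
      pr ∈ c.G ↔ (u.u.toFun pr.1, u.u.toFun pr.2) ∈ c'.G) ∧
    (c.gr = none ↔ c'.gr = none) ∧
    (∀ g g', c.gr = some g → c'.gr = some g' →
      ∀ x, u.u.toFun (g.γ.toFun x) = g'.γ.toFun (u.u.toFun x))

/-! ### Function classes on the interval -/

/-- `C^∞_c(0,1]`: smooth functions vanishing near `0`. -/
def SmoothVan0 (φ : ℝ → ℂ) : Prop :=
  ContDiff ℝ (⊤ : ℕ∞) φ ∧ ∃ ε > (0 : ℝ), ∀ t ≤ ε, φ t = 0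

/-- `C^∞_c(0,1)`: smooth functions vanishing near `0` and near `1`. -/
def SmoothVan01 (φ : ℝ → ℂ) : Prop :=
  SmoothVan0 φ ∧ ∃ ε > (0 : ℝ), ∀ t, 1 - ε ≤ t → φ t = 0

/-- `C¹₀((0,1]) `: `C¹` functions with `φ(0) = 0` and `φ'(0) = 0`. -/
def C1Van0 (φ : ℝ → ℂ) : Prop :=
  ContDiff ℝ 1 φ ∧ φ 0 = 0 ∧ deriv φ 0 = 0

/-! ### Boundary data and Hilsum bordisms -/

/-- Boundary data `(θ, p)` for a closed cycle `c = (E, D)` relative to a symmetric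
chain `Fc = (F, Q)`, together with a model `L` of the cylinder `L²[0,1] ⊗̂ E`
(with its `C[0,1]`-action `mult`, its `A`-action `ρL` and the operator `Ψ(D)`,
whose graph is `PsiG`). -/
structure BoundaryData {𝓐 : DenseSub A} (Fc : SChain 𝓐 B) (c : KKCycle 𝓐 B) where
  L : HilbMod B
  ρL : RepOn A L
  mult : (ℝ → ℂ) → Adj L L
  mult_mul : ∀ φ ψ : ℝ → ℂ, Continuous φ → Continuous ψ →
    ∀ x, (mult (fun t => φ t * ψ t)).toFun x = (mult φ).toFun ((mult ψ).toFun x)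
  mult_add : ∀ φ ψ : ℝ → ℂ, Continuous φ → Continuous ψ →
    ∀ x, (mult (fun t => φ t + ψ t)).toFun x = (mult φ).toFun x + (mult ψ).toFun x
  mult_star : ∀ φ : ℝ → ℂ, Continuous φ →
    (mult (fun t => (starRingEnd ℂ) (φ t))).toFun = (mult φ).adjFun
  mult_comm_rep : ∀ (φ : ℝ → ℂ) (a : A) x,
    (mult φ).toFun ((ρL.π a).toFun x) = (ρL.π a).toFun ((mult φ).toFun x)
  /-- the chain has complementary parity to the cycle -/
  parity : Fc.gr.isSome ↔ c.gr = none
  /-- the graph of the operator `Ψ(D)` on the cylinder -/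
  PsiG : Set (L.carrier × L.carrier)
  psi_symm : IsSymmetricGraph L PsiG
  psi_semireg : IsSemiRegular L L PsiG
  /-- the projection `p` -/
  p : Adj Fc.E Fc.E
  p_idem : ∀ x, p.toFun (p.toFun x) = p.toFun x
  p_sa : p.adjFun = p.toFun
  p_comm : ∀ (a : A) x, p.toFun ((Fc.ρ.π a).toFun x) = (Fc.ρ.π a).toFun (p.toFun x)
  /-- the isomorphism `θ : pF ≅ L²[0,1] ⊗̂ E`, as a coisometry on `F` with
  `θ*θ = p`. -/
  θ : Adj Fc.E L
  θ_p : ∀ x, θ.toFun (p.toFun x) = θ.toFun x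
  θ_coisom : ∀ z, θ.toFun (θ.adjFun z) = z
  θ_isom : ∀ x, θ.adjFun (θ.toFun x) = p.toFun x
  θ_rep : ∀ (a : A) x, θ.toFun ((Fc.ρ.π a).toFun x) = (ρL.π a).toFun (θ.toFun x)

namespace BoundaryData

variable {𝓐 : DenseSub A} {Fc : SChain 𝓐 B} {c : KKCycle 𝓐 B}

/-- The operator `b(φ) = θ (φ ⊗ 1) θ⁻¹ p + φ(1)(1-p)` on `F`. -/
def bop0 (d : BoundaryData Fc c) (φ : ℝ → ℂ) (x : Fc.E.carrier) : Fc.E.carrier :=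
  d.θ.adjFun ((d.mult φ).toFun (d.θ.toFun x)) + φ 1 • (x - d.p.toFun x)

/-- The operator `b(φ ⊗ a)` on `F`. -/
def bopA (d : BoundaryData Fc c) (φ : ℝ → ℂ) (a : A) (x : Fc.E.carrier) : Fc.E.carrier :=
  d.bop0 φ ((Fc.ρ.π a).toFun x)

/-- Hilsum's boundary conditions: `c` is a boundary of the symmetric chain `Fc`
with boundary data `(θ, p)`. -/
def IsBoundaryOf (d : BoundaryData Fc c) : Prop :=
  (∀ φ : ℝ → ℂ, SmoothVan0 φ →
    ∀ x ∈ gdom (adjointGraph Fc.E Fc.E Fc.G), d.bop0 φ x ∈ gdom Fc.G) ∧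
  (∀ φ : ℝ → ℂ, SmoothVan01 φ →
    ((fun z => (d.mult φ).toFun z) '' gdom d.PsiG
        = (fun x => d.θ.toFun (d.bop0 φ x)) '' gdom Fc.G) ∧
    (∀ x w, x ∈ gdom Fc.G → (d.bop0 φ x, w) ∈ Fc.G →
      (d.θ.toFun (d.bop0 φ x), d.θ.toFun w) ∈ d.PsiG)) ∧
  (∀ φ₁ φ₂ : ℝ → ℂ, ContDiff ℝ (⊤ : ℕ∞) φ₁ → ContDiff ℝ (⊤ : ℕ∞) φ₂ →
    (∀ t ∈ Set.Icc (0 : ℝ) 1, φ₁ t * φ₂ t = 0) →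
    ∀ x w, (d.bop0 φ₂ x, w) ∈ Fc.G → d.bop0 φ₁ w = 0)

/-- `(Fc, Q, θ, p)` is a bordism: the boundary conditions hold, and the induced
symmetric `(C¹₀((0,1],𝒜), B)`-chain is half-closed. -/
def IsBordism (d : BoundaryData Fc c) : Prop :=
  d.IsBoundaryOf ∧
  (∀ φ : ℝ → ℂ, C1Van0 φ → ∀ a : 𝓐.alg,
    (∃ T C : Adj Fc.E Fc.E, (∀ x, T.toFun x = d.bopA φ (a : A) x) ∧ IsLipFor Fc.E Fc.G T C) ∧
    (∀ x ∈ gdom (adjointGraph Fc.E Fc.E Fc.G), d.bopA φ (a : A) x ∈ gdom Fc.G) ∧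
    (∃ K : Fc.E.carrier →L[ℂ] Fc.E.carrier, IsCompactOp Fc.E Fc.E K ∧
      ∀ x y z, (x, y) ∈ Fc.G → (y, z) ∈ adjointGraph Fc.E Fc.E Fc.G →
        K (x + z) = d.bopA φ (a : A) x))

end BoundaryData

/-- A closed cycle is nullbordant when it is the boundary of a bordism. -/
def Nullbordant {𝓐 : DenseSub A} (c : KKCycle 𝓐 B) : Prop :=
  ∃ (Fc : SChain 𝓐 B) (d : BoundaryData Fc c), d.IsBordism

/-- Hilsum's bordism relation: `c₁ ∼_bor c₂` iff `c₁ + (-c₂)` is nullbordant. -/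
def Bordant {𝓐 : DenseSub A} (c₁ c₂ : KKCycle 𝓐 B) : Prop :=
  ∃ n₂ s : KKCycle 𝓐 B, IsNegOf n₂ c₂ ∧ IsSumOf s c₁ n₂ ∧ Nullbordant s

/-- The bordism group `Ω_*(𝒜, B)` (as a set of bordism classes). -/
def Omega (𝓐 : DenseSub A) (B : Type) [NonUnitalCStarAlgebra B] : Type 1 :=
  Quot (fun c c' : KKCycle 𝓐 B => Bordant c c')

end UKK

end

namespace UKK

/-!
On `E × E`, the operator `(x, y) ↦ (T* y, T x)` is self-adjoint as soon as `T` is regular, and the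
theorem amounts to the surjectivity of `D + iμ`, `μ ≠ 0`, for `D (x, y) = (C y, (S + T) x)` with `C`
the closure of `S + T*`. Since `C ⊆ (S + T)*`, the operator `D` is symmetric and hence
`|μ| ‖x‖ ≤ const * ‖(D + iμ) x‖`, so that it is enough to treat large `|μ|`.

Let `Jₘ = im(S + im)⁻¹` be the Yosida approximants of `S`. The bounded approximants
`Sₙ = n² S(n² + S²)⁻¹` perturb the self-adjoint operator of `T` and `T*` boundedly, so for `S`
replaced by `Sₙ` the equation `(D + iμ) u = v` is solvable. Applying the cutoff `J₋ₘ Jₘ` to `u`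
moves it into the domain of `S`. The hypothesis on `ST + TS` makes the commutator of this cutoff
with `T` bounded uniformly in `m`, while replacing `Sₙ` by `S` behind the cutoff costs an error of
order `m² / n`. Both errors are absorbed when `|μ|` is large: choosing `m` and then `n` solves the
equation for `D` up to half the norm of `v`, and the range, being closed, is everything.

Closedness of `S + T` follows from `‖⟪S x, T x⟫ + ⟪T x, S x⟫‖ ≤ const * ‖x‖ (‖S x‖ + ‖x‖)`, which
bounds the cross terms of `⟪(S + T) x, (S + T) x⟫`.
-/

section InnerProduct

variable {B : Type} [NonUnitalCStarAlgebra B] (E : HilbMod B)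

namespace HilbMod

lemma inner_add_left (x y z : E.carrier) : E.inner (x + y) z = E.inner x z + E.inner y z := by
  rw [← E.star_inner z, E.inner_add_right, star_add, E.star_inner, E.star_inner]

lemma inner_smul_left (c : ℂ) (x z : E.carrier) :
    E.inner (c • x) z = star c • E.inner x z := by
  rw [← E.star_inner z, E.inner_smul_right, star_smul, E.star_inner]

lemma inner_smulB_left (x z : E.carrier) (b : B) :
    E.inner (E.smulB x b) z = star b * E.inner x z := by
  rw [← E.star_inner z, E.inner_smulB_right, star_mul, E.star_inner]

lemma norm_inner_self (x : E.carrier) : ‖E.inner x x‖ = ‖x‖ * ‖x‖ := by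
  rw [← E.norm_sq_eq, sq]

/-- The `B`-valued inner product as a bounded sesquilinear map, through which it inherits
continuity and additivity from the API of continuous linear maps. -/
noncomputable def innerL : E.carrier →L⋆[ℂ] E.carrier →L[ℂ] B :=
  LinearMap.mkContinuous₂
    (LinearMap.mk₂'ₛₗ (starRingEnd ℂ) (RingHom.id ℂ) E.inner E.inner_add_left E.inner_smul_left
      E.inner_add_right fun c x y => E.inner_smul_right x c y)
    1 fun x y => by simpa using E.norm_inner_le x y

@[simp]
lemma innerL_apply (x y : E.carrier) : innerL E x y = E.inner x y := rfl

lemma norm_innerL_le : ‖innerL E‖ ≤ 1 := LinearMap.mkContinuous₂_norm_le _ zero_le_one _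

lemma eq_of_inner {x y : E.carrier} (h : ∀ z, E.inner z x = E.inner z y) : x = y := by
  have h0 : E.inner (x - y) (x - y) = 0 := by
    rw [← innerL_apply, map_sub, innerL_apply, innerL_apply, h, sub_self]
  simpa [h0, sub_eq_zero] using E.norm_sq_eq (x - y)

lemma smulB_smul (x : E.carrier) (c : ℂ) (b : B) : E.smulB x (c • b) = c • E.smulB x b :=
  E.eq_of_inner fun z => by
    rw [E.inner_smulB_right, E.inner_smul_right, E.inner_smulB_right, mul_smul_comm]

lemma norm_smulB_le (x : E.carrier) (b : B) : ‖E.smulB x b‖ ≤ ‖x‖ * ‖b‖ := by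
  refine (sq_le_sq₀ (norm_nonneg _) (by positivity)).1 ?_
  calc ‖E.smulB x b‖ ^ 2 = ‖star b * E.inner x x * b‖ := by
        rw [E.norm_sq_eq, E.inner_smulB_right, E.inner_smulB_left]
    _ ≤ ‖star b‖ * ‖E.inner x x‖ * ‖b‖ :=
        (norm_mul_le _ _).trans (by gcongr; exact norm_mul_le _ _)
    _ = (‖x‖ * ‖b‖) ^ 2 := by rw [norm_star, norm_inner_self]; ring

end HilbMod

end InnerProduct

/-! ### The C⋆-algebra of adjointable operators -/

section AdjointableOperators

variable {B : Type} [NonUnitalCStarAlgebra B] {E : HilbMod B}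

variable (E) in
/-- The relation "`s` is an adjoint of `t`" between bounded operators; no `B`-linearity is asked
for, as it is automatic. -/
def IsAdjPair (t s : E.carrier →L[ℂ] E.carrier) : Prop :=
  ∀ x y, E.inner (t x) y = E.inner x (s y)

namespace IsAdjPair

variable {t s t' s' : E.carrier →L[ℂ] E.carrier}

lemma symm (h : IsAdjPair E t s) : IsAdjPair E s t := fun x y => by
  rw [← E.star_inner, ← h, E.star_inner]

lemma unique (h : IsAdjPair E t s) (h' : IsAdjPair E t s') : s = s' :=
  ContinuousLinearMap.ext fun y => E.eq_of_inner fun z => by rw [← h, ← h']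

lemma add (h : IsAdjPair E t s) (h' : IsAdjPair E t' s') : IsAdjPair E (t + t') (s + s') :=
  fun x y => by simp [E.inner_add_left, E.inner_add_right, h x y, h' x y]

lemma smul (c : ℂ) (h : IsAdjPair E t s) : IsAdjPair E (c • t) (star c • s) :=
  fun x y => by simp [E.inner_smul_left, E.inner_smul_right, h x y]

lemma sub (h : IsAdjPair E t s) (h' : IsAdjPair E t' s') : IsAdjPair E (t - t') (s - s') := by
  simpa [sub_eq_add_neg] using h.add (h'.smul (-1))

lemma mul (h : IsAdjPair E t s) (h' : IsAdjPair E t' s') : IsAdjPair E (t * t') (s' * s) :=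
  fun x y => by simp [h _ _, h' _ _]

lemma norm_apply_sq_le (h : IsAdjPair E t s) (x : E.carrier) :
    ‖t x‖ ^ 2 ≤ ‖s * t‖ * ‖x‖ ^ 2 :=
  calc ‖t x‖ ^ 2 = ‖E.inner x ((s * t) x)‖ := by rw [E.norm_sq_eq, h]; rfl
    _ ≤ ‖x‖ * (‖s * t‖ * ‖x‖) :=
        (E.norm_inner_le _ _).trans (by gcongr; exact (s * t).le_opNorm x)
    _ = ‖s * t‖ * ‖x‖ ^ 2 := by ring

lemma norm_mul_self_le (h : IsAdjPair E t s) : ‖t‖ * ‖t‖ ≤ ‖s * t‖ := by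
  have ht : ‖t‖ ≤ √‖s * t‖ := t.opNorm_le_bound (Real.sqrt_nonneg _) fun x => by
    rw [← Real.sqrt_sq (norm_nonneg x), ← Real.sqrt_mul (norm_nonneg _)]
    exact Real.le_sqrt_of_sq_le (h.norm_apply_sq_le x)
  calc ‖t‖ * ‖t‖ ≤ √‖s * t‖ * √‖s * t‖ := by gcongr
    _ = ‖s * t‖ := Real.mul_self_sqrt (norm_nonneg _)

lemma norm_le (h : IsAdjPair E t s) : ‖t‖ ≤ ‖s‖ := by
  rcases (norm_nonneg t).eq_or_lt with h0 | h0
  · exact h0 ▸ norm_nonneg s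
  · exact le_of_mul_le_mul_right (h.norm_mul_self_le.trans (norm_mul_le s t)) h0

lemma norm_eq (h : IsAdjPair E t s) : ‖t‖ = ‖s‖ := le_antisymm h.norm_le h.symm.norm_le

end IsAdjPair

variable (E) in
/-- The algebra of adjointable operators on `E`, as a subalgebra of the bounded operators. Unlike
for the structure `Adj`, the adjoint is not part of the data, so that the norm and the algebra
structure are inherited. -/
def AdjAlg : Subalgebra ℂ (E.carrier →L[ℂ] E.carrier) where
  carrier := {t | ∃ s, IsAdjPair E t s}
  mul_mem' := fun ⟨_, h⟩ ⟨_, h'⟩ => ⟨_, h.mul h'⟩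
  add_mem' := fun ⟨_, h⟩ ⟨_, h'⟩ => ⟨_, h.add h'⟩
  algebraMap_mem' c := ⟨star c • 1, (IsAdjPair.smul (t := 1) (s := 1) c fun _ _ => rfl)⟩

namespace AdjAlg

noncomputable instance : Star (AdjAlg E) where
  star t := ⟨t.2.choose, _, t.2.choose_spec.symm⟩

lemma isAdjPair_star (t : AdjAlg E) : IsAdjPair E (t : E.carrier →L[ℂ] E.carrier) (star t).1 :=
  t.2.choose_spec

lemma star_eq {t s : AdjAlg E} (h : IsAdjPair E t.1 s.1) : star t = s :=
  Subtype.ext ((isAdjPair_star t).unique h)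

noncomputable instance : StarRing (AdjAlg E) where
  star_involutive t := star_eq (isAdjPair_star t).symm
  star_mul t t' := star_eq ((isAdjPair_star t).mul (isAdjPair_star t'))
  star_add t t' := star_eq ((isAdjPair_star t).add (isAdjPair_star t'))

instance : StarModule ℂ (AdjAlg E) where
  star_smul c t := star_eq ((isAdjPair_star t).smul c)

instance : CStarRing (AdjAlg E) where
  norm_mul_self_le t := (isAdjPair_star t).norm_mul_self_le

lemma isClosed_setOf_isAdjPair :
    IsClosed {p : (E.carrier →L[ℂ] E.carrier) × (E.carrier →L[ℂ] E.carrier) |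
      IsAdjPair E p.1 p.2} := by
  simp only [IsAdjPair, Set.ofPred_forall, ← HilbMod.innerL_apply]
  exact isClosed_iInter fun x => isClosed_iInter fun y =>
    isClosed_eq (by fun_prop) (by fun_prop)

instance : CompleteSpace (AdjAlg E) := by
  let P := {p : (E.carrier →L[ℂ] E.carrier) × (E.carrier →L[ℂ] E.carrier) | IsAdjPair E p.1 p.2}
  have : CompleteSpace P := isClosed_setOf_isAdjPair.completeSpace_coe
  have hfst : Isometry fun p : P => p.1.1 := Isometry.of_dist_eq fun p q => by
    rw [Subtype.dist_eq, Prod.dist_eq, dist_eq_norm p.1.2, ← (p.2.sub q.2).norm_eq,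
      ← dist_eq_norm, max_self]
  have hrange : Set.range (fun p : P => p.1.1) = AdjAlg E :=
    Set.ext fun t => ⟨fun ⟨p, hp⟩ => hp ▸ ⟨p.1.2, p.2⟩, fun ⟨s, hs⟩ => ⟨⟨(t, s), hs⟩, rfl⟩⟩
  exact completeSpace_coe_iff_isComplete.2 (hrange ▸ hfst.isUniformInducing.isComplete_range)

noncomputable instance : CStarAlgebra (AdjAlg E) where

end AdjAlg

/-- The rank one operator `z ↦ x ⟪w, z⟫`. -/
noncomputable def rankOne (x w : E.carrier) : E.carrier →L[ℂ] E.carrier :=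
  LinearMap.mkContinuous
    { toFun := fun z => E.smulB x (E.inner w z)
      map_add' := fun y z => by rw [E.inner_add_right, E.smulB_add]
      map_smul' := fun c z => by rw [E.inner_smul_right, E.smulB_smul, RingHom.id_apply] }
    (‖x‖ * ‖w‖) fun z => (E.norm_smulB_le _ _).trans <| by
      rw [mul_assoc]; gcongr; exact E.norm_inner_le _ _

lemma rankOne_apply (x w z : E.carrier) : rankOne x w z = E.smulB x (E.inner w z) := rfl

lemma isAdjPair_rankOne (x w : E.carrier) : IsAdjPair E (rankOne x w) (rankOne w x) :=
  fun y z => by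
    rw [rankOne_apply, rankOne_apply, E.inner_smulB_left, E.inner_smulB_right, E.star_inner]

lemma norm_sq_le_norm_rankOne (x : E.carrier) : ‖x‖ ^ 2 ≤ ‖rankOne x x‖ := by
  rcases (norm_nonneg x).eq_or_lt with h0 | h0
  · simp [← h0]
  have hinner : E.inner x (rankOne x x x) = star (E.inner x x) * E.inner x x := by
    rw [rankOne_apply, E.inner_smulB_right, E.star_inner]
  refine le_of_mul_le_mul_right ?_ (mul_pos h0 h0)
  calc ‖x‖ ^ 2 * (‖x‖ * ‖x‖) = ‖E.inner x (rankOne x x x)‖ := by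
        rw [hinner, CStarRing.norm_star_mul_self, E.norm_inner_self]; ring
    _ ≤ ‖x‖ * (‖rankOne x x‖ * ‖x‖) :=
        (E.norm_inner_le _ _).trans (by gcongr; exact (rankOne x x).le_opNorm x)
    _ = ‖rankOne x x‖ * (‖x‖ * ‖x‖) := by ring

lemma norm_star_mul_self_le_add {A : Type*} [CStarAlgebra A] (a b : A) :
    ‖star a * a‖ ≤ ‖star a * a + star b * b‖ := by
  let := CStarAlgebra.spectralOrder A
  have := CStarAlgebra.spectralOrderedRing A
  exact CStarAlgebra.norm_le_norm_of_nonneg_of_le (star_mul_self_nonneg a)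
    (le_add_of_nonneg_right (star_mul_self_nonneg b))

/-- `HilbMod` does not ask `⟪x, x⟫` to be positive, and it need not be; the estimate is drawn from
the positivity of `θ* θ` for the rank one operators `θ = x ⟪x, ·⟫` and `θ = y ⟪x, ·⟫`. -/
lemma HilbMod.norm_sq_le_norm_inner_add (x y : E.carrier) :
    ‖x‖ ^ 2 ≤ ‖E.inner x x + E.inner y y‖ := by
  rcases (norm_nonneg x).eq_or_lt with h0 | h0
  · simp [← h0]
  let θ (v : E.carrier) : AdjAlg E := ⟨rankOne v x, _, isAdjPair_rankOne v x⟩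
  have hθ (v : E.carrier) : star (θ v) = ⟨rankOne x v, _, isAdjPair_rankOne x v⟩ :=
    AdjAlg.star_eq (isAdjPair_rankOne v x)
  have hsum (z : E.carrier) : (star (θ x) * θ x + star (θ y) * θ y).1 z =
      E.smulB x ((E.inner x x + E.inner y y) * E.inner x z) := by
    rw [hθ, hθ, add_mul, E.smulB_add, ← E.inner_smulB_right, ← E.inner_smulB_right]
    rfl
  have hupper : ‖star (θ x) * θ x + star (θ y) * θ y‖ ≤
      ‖E.inner x x + E.inner y y‖ * (‖x‖ * ‖x‖) := by
    refine ContinuousLinearMap.opNorm_le_bound _ (by positivity) fun z => ?_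
    calc ‖(star (θ x) * θ x + star (θ y) * θ y).1 z‖
        ≤ ‖x‖ * (‖E.inner x x + E.inner y y‖ * (‖x‖ * ‖z‖)) := by
          rw [hsum]
          refine (E.norm_smulB_le _ _).trans ?_
          gcongr
          exact (norm_mul_le _ _).trans (by gcongr; exact E.norm_inner_le _ _)
      _ = ‖E.inner x x + E.inner y y‖ * (‖x‖ * ‖x‖) * ‖z‖ := by ring
  refine le_of_mul_le_mul_right ?_ (mul_pos h0 h0)
  calc ‖x‖ ^ 2 * (‖x‖ * ‖x‖) = ‖x‖ ^ 2 * ‖x‖ ^ 2 := by ring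
    _ ≤ ‖rankOne x x‖ * ‖rankOne x x‖ := by gcongr <;> exact norm_sq_le_norm_rankOne x
    _ = ‖star (θ x) * θ x‖ := (CStarRing.norm_star_mul_self (x := θ x)).symm
    _ ≤ _ := (norm_star_mul_self_le_add _ _).trans hupper

end AdjointableOperators

/-! ### Ranges of `G + iμ` for linear relations on a Banach space -/

section ShiftedRange

variable {X : Type*} [NormedAddCommGroup X] [NormedSpace ℂ X]

lemma isClosed_map_of_bound {V W : Type*} [NormedAddCommGroup V] [NormedSpace ℂ V]
    [CompleteSpace V] [NormedAddCommGroup W] [NormedSpace ℂ W] {G : Submodule ℂ V}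
    (hG : IsClosed (G : Set V)) (f : V →L[ℂ] W) {c : ℝ} (h : ∀ v ∈ G, ‖v‖ ≤ c * ‖f v‖) :
    IsClosed (G.map (f : V →ₗ[ℂ] W) : Set W) := by
  have : CompleteSpace G := hG.completeSpace_coe
  have hanti : AntilipschitzWith c.toNNReal (f ∘L G.subtypeL) :=
    (f ∘L G.subtypeL).antilipschitz_of_bound fun v =>
      (h v v.2).trans (by gcongr; exacts [Real.le_coe_toNNReal c, le_rfl])
  convert hanti.isClosed_range (f ∘L G.subtypeL).uniformContinuous using 1
  ext w
  simp

lemma eq_top_of_forall_exists_norm_sub_le {V : Submodule ℂ X} (hV : IsClosed (V : Set X))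
    {θ : ℝ} (hθ : θ < 1) (h : ∀ v, ∃ u ∈ V, ‖v - u‖ ≤ θ * ‖v‖) : V = ⊤ := by
  by_contra hne
  obtain ⟨r, hθr, hr⟩ := exists_between hθ
  obtain ⟨v, hv, hfar⟩ := riesz_lemma hV (by simpa [Submodule.eq_top_iff'] using hne) hr
  obtain ⟨u, hu, hnear⟩ := h v
  have hpos : 0 < ‖v‖ := norm_pos_iff.2 fun h0 => hv (h0 ▸ V.zero_mem)
  exact (mul_lt_mul_of_pos_right hθr hpos).not_ge ((hfar u hu).trans hnear)

/-- The map `(x, y) ↦ y + iμx`; on the graph of an operator `D` it is `D + iμ`. -/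
noncomputable def shift (μ : ℝ) : X × X →L[ℂ] X :=
  ContinuousLinearMap.snd ℂ X X + ((μ : ℂ) * Complex.I) • ContinuousLinearMap.fst ℂ X X

lemma shift_apply (μ : ℝ) (p : X × X) : shift μ p = p.2 + ((μ : ℂ) * Complex.I) • p.1 := rfl

lemma norm_ofReal_mul_I_smul (μ : ℝ) (x : X) : ‖((μ : ℂ) * Complex.I) • x‖ = |μ| * ‖x‖ := by
  simp [norm_smul]

lemma shift_sub_shift (μ ν : ℝ) (p : X × X) :
    shift μ p - shift ν p = (((μ - ν : ℝ) : ℂ) * Complex.I) • p.1 := by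
  simp only [shift_apply, Complex.ofReal_sub]
  module

/-- The range of `D + iμ` for the relation `D` with graph `G`. -/
noncomputable def shiftRange (μ : ℝ) (G : Submodule ℂ (X × X)) : Submodule ℂ X :=
  G.map (shift μ : X × X →L[ℂ] X).toLinearMap

/-- The estimate `|μ| ‖x‖ ≤ C ‖(D + iμ) x‖`, uniform in `μ`, for the relation `D` with graph
`G`. -/
def ShiftBounded (C : ℝ) (G : Submodule ℂ (X × X)) : Prop :=
  ∀ p ∈ G, ∀ μ : ℝ, |μ| * ‖p.1‖ ≤ C * ‖shift μ p‖

variable {G : Submodule ℂ (X × X)} {C μ ν : ℝ}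

lemma exists_shift_eq (h : shiftRange μ G = ⊤) (v : X) :
    ∃ p ∈ G, shift μ p = v :=
  Submodule.eq_top_iff'.1 h v

namespace ShiftBounded

lemma isClosed_shiftRange [CompleteSpace X] (hC : ShiftBounded C G)
    (hG : IsClosed (G : Set (X × X))) (hμ : μ ≠ 0) :
    IsClosed (shiftRange μ G : Set X) := by
  refine isClosed_map_of_bound hG (shift μ) (c := max (C / |μ|) (1 + C)) fun p hp => ?_
  have hfst : ‖p.1‖ ≤ C / |μ| * ‖shift μ p‖ := by
    rw [div_mul_eq_mul_div, le_div_iff₀ (abs_pos.2 hμ), mul_comm]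
    exact hC p hp μ
  have hsnd : ‖p.2‖ ≤ (1 + C) * ‖shift μ p‖ :=
    calc ‖p.2‖ ≤ ‖shift μ p‖ + ‖((μ : ℂ) * Complex.I) • p.1‖ := by
          simpa [shift_apply] using norm_sub_le (shift μ p) (((μ : ℂ) * Complex.I) • p.1)
      _ ≤ ‖shift μ p‖ + C * ‖shift μ p‖ := by
          rw [norm_ofReal_mul_I_smul]; gcongr 1; exact hC p hp μ
      _ = (1 + C) * ‖shift μ p‖ := by ring
  exact max_le (hfst.trans (by gcongr; exact le_max_left ..))
    (hsnd.trans (by gcongr; exact le_max_right ..))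

variable [CompleteSpace X]

lemma shiftRange_eq_top_of_near (hC : ShiftBounded C G) (hG : IsClosed (G : Set (X × X)))
    (hμ : μ ≠ 0) (hν : ν ≠ 0) (hnear : 2 * C * |μ - ν| ≤ |μ|)
    (h : shiftRange μ G = ⊤) : shiftRange ν G = ⊤ := by
  refine eq_top_of_forall_exists_norm_sub_le (hC.isClosed_shiftRange hG hν) one_half_lt_one
    fun v => ?_
  obtain ⟨p, hp, rfl⟩ := exists_shift_eq h v
  refine ⟨shift ν p, ⟨p, hp, rfl⟩, le_of_mul_le_mul_left ?_ (abs_pos.2 hμ)⟩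
  rw [shift_sub_shift, norm_ofReal_mul_I_smul]
  calc |μ| * (|μ - ν| * ‖p.1‖) = |μ - ν| * (|μ| * ‖p.1‖) := by ring
    _ ≤ |μ - ν| * (C * ‖shift μ p‖) := by gcongr 1; exact hC p hp μ
    _ = 2 * C * |μ - ν| * ‖shift μ p‖ / 2 := by ring
    _ ≤ |μ| * ‖shift μ p‖ / 2 := by gcongr
    _ = |μ| * (1 / 2 * ‖shift μ p‖) := by ring

lemma shiftRange_eq_top_of_pos_mul (hC : ShiftBounded C G) (hG : IsClosed (G : Set (X × X)))
    (hμν : 0 < μ * ν) (h : shiftRange μ G = ⊤) :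
    shiftRange ν G = ⊤ := by
  have hconn : IsPreconnected {t : ℝ | 0 < μ * t} :=
    ((convex_Ioi 0).linear_preimage (LinearMap.mulLeft ℝ μ)).isPreconnected
  refine hconn.induction₂' (fun s t => shiftRange s G = ⊤ →
    shiftRange t G = ⊤) (fun s hs => ?_)
    (fun _ _ _ _ _ _ hst htu => htu ∘ hst) (mul_self_pos.2 (left_ne_zero_of_mul hμν.ne')) hμν h
  have hs0 : s ≠ 0 := right_ne_zero_of_mul (ne_of_gt hs)
  have hfrom : ∀ᶠ t in nhds s, 2 * C * |s - t| < |s| :=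
    ContinuousAt.eventually_lt (by fun_prop) (by fun_prop) (by simpa using hs0)
  have hto : ∀ᶠ t in nhds s, 2 * C * |t - s| < |t| :=
    ContinuousAt.eventually_lt (by fun_prop) (by fun_prop) (by simpa using hs0)
  filter_upwards [nhdsWithin_le_nhds hfrom, nhdsWithin_le_nhds hto,
    nhdsWithin_le_nhds (eventually_ne_nhds hs0)] with t hst hts ht0
  exact ⟨hC.shiftRange_eq_top_of_near hG hs0 ht0 hst.le,
    hC.shiftRange_eq_top_of_near hG ht0 hs0 hts.le⟩

lemma shiftRange_eq_top_of_neg (hC : ShiftBounded C G) (hG : IsClosed (G : Set (X × X)))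
    (hμ : μ ≠ 0) (h : shiftRange μ G = ⊤)
    (hneg : shiftRange (-μ) G = ⊤) (hν : ν ≠ 0) :
    shiftRange ν G = ⊤ := by
  rcases (mul_ne_zero hμ hν).lt_or_gt with hlt | hgt
  · exact hC.shiftRange_eq_top_of_pos_mul hG (by linarith) hneg
  · exact hC.shiftRange_eq_top_of_pos_mul hG hgt h

end ShiftBounded

/-- The graph of `D + A`, for `D` the relation with graph `G` and `A` bounded. -/
def perturb (G : Submodule ℂ (X × X)) (A : X →L[ℂ] X) : Submodule ℂ (X × X) :=
  G.comap (LinearMap.prod (LinearMap.fst ℂ X X)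
    (LinearMap.snd ℂ X X - (A : X →ₗ[ℂ] X) ∘ₗ LinearMap.fst ℂ X X))

lemma mem_perturb {A : X →L[ℂ] X} {p : X × X} : p ∈ perturb G A ↔ (p.1, p.2 - A p.1) ∈ G :=
  Iff.rfl

lemma isClosed_perturb (hG : IsClosed (G : Set (X × X))) (A : X →L[ℂ] X) :
    IsClosed (perturb G A : Set (X × X)) :=
  hG.preimage (by fun_prop : Continuous fun p : X × X => (p.1, p.2 - A p.1))

lemma shiftRange_perturb_eq_top [CompleteSpace X] {A : X →L[ℂ] X}
    (hG : IsClosed (G : Set (X × X))) (hC : ShiftBounded C G)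
    (hCA : ShiftBounded C (perturb G A))
    (h : ∀ ν : ℝ, ν ≠ 0 → shiftRange ν G = ⊤) (hμ : μ ≠ 0) :
    shiftRange μ (perturb G A) = ⊤ := by
  obtain ⟨k, hk0, hk⟩ : ∃ k : ℝ, 0 < k ∧ 2 * C * ‖A‖ ≤ k * |μ| := by
    refine ((Filter.eventually_gt_atTop 0).and ?_).exists (f := Filter.atTop)
    filter_upwards [(Filter.tendsto_id.atTop_mul_const (abs_pos.2 hμ)).eventually_ge_atTop
      (2 * C * ‖A‖)] with k hk using hk
  have hkμ : k * μ ≠ 0 := mul_ne_zero hk0.ne' hμ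
  refine hCA.shiftRange_eq_top_of_pos_mul (isClosed_perturb hG A) (μ := k * μ)
    (by nlinarith [mul_pos hk0 (mul_self_pos.2 hμ)])
    (eq_top_of_forall_exists_norm_sub_le (hCA.isClosed_shiftRange (isClosed_perturb hG A) hkμ)
      one_half_lt_one fun v => ?_)
  obtain ⟨p, hp, rfl⟩ := exists_shift_eq (h _ hkμ) v
  refine ⟨shift (k * μ) (p.1, p.2 + A p.1), ⟨_, by simpa [mem_perturb] using hp, rfl⟩,
    le_of_mul_le_mul_left ?_ (abs_pos.2 hkμ)⟩
  have hdiff : shift (k * μ) p - shift (k * μ) (p.1, p.2 + A p.1) = -A p.1 := by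
    simp only [shift_apply]; abel
  calc |k * μ| * ‖shift (k * μ) p - shift (k * μ) (p.1, p.2 + A p.1)‖
      ≤ |k * μ| * (‖A‖ * ‖p.1‖) := by rw [hdiff, norm_neg]; gcongr; exact A.le_opNorm _
    _ = ‖A‖ * (|k * μ| * ‖p.1‖) := by ring
    _ ≤ ‖A‖ * (C * ‖shift (k * μ) p‖) := by gcongr 1; exact hC p hp _
    _ = 2 * C * ‖A‖ * ‖shift (k * μ) p‖ / 2 := by ring
    _ ≤ k * |μ| * ‖shift (k * μ) p‖ / 2 := by gcongr
    _ = |k * μ| * (1 / 2 * ‖shift (k * μ) p‖) := by rw [abs_mul, abs_of_pos hk0]; ring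

end ShiftedRange

/-! ### Symmetric relations for a definite sesquilinear form -/

section Form

variable {X Z : Type*} [NormedAddCommGroup X] [NormedSpace ℂ X] [NormedAddCommGroup Z]
  [NormedSpace ℂ Z]

/-- A bounded vector-valued Hermitian form whose quadratic form dominates the norm; this is all
that is left of the inner product on `E` when passing to `E × E` with the maximum norm. -/
structure IsDefinite [Star Z] (F : X →L⋆[ℂ] X →L[ℂ] Z) : Prop where
  star_apply : ∀ x y, star (F x y) = F y x
  norm_sq_le : ∀ x, ‖x‖ ^ 2 ≤ ‖F x x‖

/-- The relation `⟪D₀ x, y⟫ = ⟪x, D₁ y⟫` between the relations `D₀`, `D₁` with graphs `G₀`, `G₁`;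
for `G₀ = G₁` this is symmetry. -/
def IsFormalAdjoint (F : X →L⋆[ℂ] X →L[ℂ] Z) (G₀ G₁ : Submodule ℂ (X × X)) : Prop :=
  ∀ p ∈ G₀, ∀ q ∈ G₁, F p.2 q.1 = F p.1 q.2

variable {F : X →L⋆[ℂ] X →L[ℂ] Z} {G : Submodule ℂ (X × X)}

lemma form_shift_neg {p q : X × X} (h : F p.2 q.1 = F p.1 q.2) (μ : ℝ) :
    F (shift (-μ) p) q.1 = F p.1 (shift μ q) := by
  simp [shift_apply, h]

lemma IsFormalAdjoint.perturb {G₀ G₁ : Submodule ℂ (X × X)} {A : X →L[ℂ] X}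
    (hG : IsFormalAdjoint F G₀ G₁) (hA : ∀ x y, F (A x) y = F x (A y)) :
    IsFormalAdjoint F (perturb G₀ A) (perturb G₁ A) := fun p hp q hq => by
  simpa [hA] using hG _ hp _ hq

lemma IsDefinite.eq_zero [Star Z] (hF : IsDefinite F) {x : X} (h : F x x = 0) : x = 0 := by
  simpa [h] using hF.norm_sq_le x

lemma IsDefinite.mem_of_forall_eq [Star Z] (hF : IsDefinite F) (hG : IsFormalAdjoint F G G)
    {μ : ℝ} (h : shiftRange μ G = ⊤) (hneg : shiftRange (-μ) G = ⊤) {q : X × X}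
    (hq : ∀ p ∈ G, F p.2 q.1 = F p.1 q.2) : q ∈ G := by
  obtain ⟨r, hr, hrq⟩ := exists_shift_eq h (shift μ q)
  have hshift : shift μ (q - r) = 0 := by rw [map_sub, hrq, sub_self]
  have hadj (p) (hp : p ∈ G) : F p.2 (q - r).1 = F p.1 (q - r).2 := by
    simp [hq p hp, hG p hp r hr]
  obtain ⟨p, hp, hpq⟩ := exists_shift_eq hneg (q - r).1
  have hfst : (q - r).1 = 0 := hF.eq_zero <|
    calc F (q - r).1 (q - r).1 = F p.1 (shift μ (q - r)) := by
          rw [← form_shift_neg (hadj p hp), hpq]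
      _ = 0 := by rw [hshift, map_zero]
  have hsnd : (q - r).2 = 0 := by simpa [shift_apply, hfst] using hshift
  rwa [sub_eq_zero.1 (Prod.ext hfst hsnd : q - r = 0)]

variable [StarAddMonoid Z] [NormedStarGroup Z] [StarModule ℂ Z]

lemma abs_mul_norm_le_norm_add_smul {a b : Z} (ha : star a = a) (hb : star b = b) (μ : ℝ) :
    |μ| * ‖b‖ ≤ ‖a + ((μ : ℂ) * Complex.I) • b‖ := by
  set z := a + ((μ : ℂ) * Complex.I) • b with hz
  have hsub : z - star z = (2 : ℝ) • ((μ : ℂ) * Complex.I) • b := by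
    simp only [hz, star_add, star_smul, ha, hb, star_mul', Complex.star_def, Complex.conj_I,
      Complex.conj_ofReal]
    module
  have := norm_sub_le z (star z)
  rw [hsub, norm_smul, norm_ofReal_mul_I_smul, norm_star, Real.norm_ofNat] at this
  linarith

lemma IsDefinite.shiftBounded (hF : IsDefinite F) (hG : IsFormalAdjoint F G G) :
    ShiftBounded ‖F‖ G := by
  intro p hp μ
  rcases (norm_nonneg p.1).eq_or_lt with h0 | h0
  · rw [← h0, mul_zero]; positivity
  refine le_of_mul_le_mul_right ?_ h0
  calc |μ| * ‖p.1‖ * ‖p.1‖ = |μ| * ‖p.1‖ ^ 2 := by ring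
    _ ≤ |μ| * ‖F p.1 p.1‖ := by gcongr; exact hF.norm_sq_le _
    _ ≤ ‖F p.1 p.2 + ((μ : ℂ) * Complex.I) • F p.1 p.1‖ :=
        abs_mul_norm_le_norm_add_smul (by rw [hF.star_apply, hG p hp p hp])
          (hF.star_apply _ _) μ
    _ = ‖F p.1 (shift μ p)‖ := by rw [shift_apply, map_add, map_smul]
    _ ≤ ‖F‖ * ‖p.1‖ * ‖shift μ p‖ := F.le_opNorm₂ _ _
    _ = ‖F‖ * ‖shift μ p‖ * ‖p.1‖ := by ring

end Form

/-! ### Off-diagonal relations and regularity -/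

section Offdiag

variable {X Z : Type*} [NormedAddCommGroup X] [NormedSpace ℂ X] [NormedAddCommGroup Z]
  [NormedSpace ℂ Z]

/-- The form `⟪x₁, y₁⟫ + ⟪x₂, y₂⟫` on `X × X` induced by a form on `X`. -/
noncomputable def pairForm (F : X →L⋆[ℂ] X →L[ℂ] Z) : X × X →L⋆[ℂ] X × X →L[ℂ] Z :=
  F.bilinearComp (ContinuousLinearMap.fst ℂ X X) (ContinuousLinearMap.fst ℂ X X) +
    F.bilinearComp (ContinuousLinearMap.snd ℂ X X) (ContinuousLinearMap.snd ℂ X X)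

lemma pairForm_apply (F : X →L⋆[ℂ] X →L[ℂ] Z) (p q : X × X) :
    pairForm F p q = F p.1 q.1 + F p.2 q.2 := rfl

/-- The graph of `(x, y) ↦ (D₁ y, D₀ x)` on `X × X`, for the relations `D₀`, `D₁` with graphs `G₀`,
`G₁`. It is symmetric when `D₀` and `D₁` are formally adjoint, which reduces questions about such
a pair to a symmetric relation. -/
def offdiag (G₀ G₁ : Submodule ℂ (X × X)) : Submodule ℂ ((X × X) × (X × X)) where
  carrier := {p | (p.1.1, p.2.2) ∈ G₀ ∧ (p.1.2, p.2.1) ∈ G₁}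
  add_mem' := fun hp hq => ⟨G₀.add_mem hp.1 hq.1, G₁.add_mem hp.2 hq.2⟩
  zero_mem' := ⟨G₀.zero_mem, G₁.zero_mem⟩
  smul_mem' := fun c _ hp => ⟨G₀.smul_mem c hp.1, G₁.smul_mem c hp.2⟩

variable {F : X →L⋆[ℂ] X →L[ℂ] Z} {G G₀ G₁ : Submodule ℂ (X × X)}

lemma isClosed_offdiag (h₀ : IsClosed (G₀ : Set (X × X))) (h₁ : IsClosed (G₁ : Set (X × X))) :
    IsClosed (offdiag G₀ G₁ : Set ((X × X) × (X × X))) :=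
  (h₀.preimage (by fun_prop : Continuous fun p : (X × X) × (X × X) => (p.1.1, p.2.2))).inter
    (h₁.preimage (by fun_prop : Continuous fun p : (X × X) × (X × X) => (p.1.2, p.2.1)))

lemma IsFormalAdjoint.offdiag [Star Z] (hF : IsDefinite F) (h : IsFormalAdjoint F G₀ G₁) :
    IsFormalAdjoint (pairForm F) (offdiag G₀ G₁) (offdiag G₀ G₁) := fun p hp q hq => by
  rw [pairForm_apply, pairForm_apply, h _ hp.1 _ hq.2, ← hF.star_apply, ← h _ hq.1 _ hp.2,
    hF.star_apply, add_comm]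

lemma perturb_offdiag (A : X →L[ℂ] X) :
    perturb (offdiag G₀ G₁) ((A ∘L ContinuousLinearMap.snd ℂ X X).prod
      (A ∘L ContinuousLinearMap.fst ℂ X X)) = offdiag (perturb G₀ A) (perturb G₁ A) := rfl

lemma shiftRange_eq_top_of_offdiag_self {μ : ℝ} (h : shiftRange μ (offdiag G G) = ⊤) :
    shiftRange μ G = ⊤ := by
  refine Submodule.eq_top_iff'.2 fun v => ?_
  obtain ⟨p, hp, hpv⟩ := exists_shift_eq h (v, v)
  have hfst : p.2.1 + ((μ : ℂ) * Complex.I) • p.1.1 = v := congrArg Prod.fst hpv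
  have hsnd : p.2.2 + ((μ : ℂ) * Complex.I) • p.1.2 = v := congrArg Prod.snd hpv
  refine ⟨_, G.smul_mem (1 / 2 : ℂ) (G.add_mem hp.1 hp.2), ?_⟩
  calc shift μ ((1 / 2 : ℂ) • ((p.1.1, p.2.2) + (p.1.2, p.2.1)))
      = (1 / 2 : ℂ) • ((p.2.1 + ((μ : ℂ) * Complex.I) • p.1.1) +
          (p.2.2 + ((μ : ℂ) * Complex.I) • p.1.2)) := by
        rw [map_smul, shift_apply, Prod.snd_add, Prod.fst_add]; module
    _ = v := by rw [hfst, hsnd]; module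

lemma shiftRange_offdiag_perturb_eq_top [CompleteSpace X] [StarAddMonoid Z] [NormedStarGroup Z]
    [StarModule ℂ Z] (hF : IsDefinite F) (hFF : IsDefinite (pairForm F))
    (h : IsFormalAdjoint F G₀ G₁) (h₀ : IsClosed (G₀ : Set (X × X)))
    (h₁ : IsClosed (G₁ : Set (X × X)))
    (htop : ∀ ν : ℝ, ν ≠ 0 → shiftRange ν (offdiag G₀ G₁) = ⊤) {A : X →L[ℂ] X}
    (hA : ∀ x y, F (A x) y = F x (A y)) {μ : ℝ} (hμ : μ ≠ 0) :
    shiftRange μ (offdiag (perturb G₀ A) (perturb G₁ A)) = ⊤ := by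
  rw [← perturb_offdiag]
  refine shiftRange_perturb_eq_top (isClosed_offdiag h₀ h₁) (hFF.shiftBounded (h.offdiag hF)) ?_
    htop hμ
  rw [perturb_offdiag]
  exact hFF.shiftBounded ((h.perturb hA).offdiag hF)

end Offdiag

section Regular

variable {B : Type} [NonUnitalCStarAlgebra B] {E : HilbMod B}

lemma isDefinite_innerL : IsDefinite E.innerL :=
  ⟨E.star_inner, fun x => (E.norm_sq_eq x).le⟩

lemma isDefinite_pairForm_innerL : IsDefinite (pairForm E.innerL) where
  star_apply x y := by
    simp only [pairForm_apply, star_add, E.innerL_apply, E.star_inner]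
  norm_sq_le x := by
    rcases max_choice ‖x.1‖ ‖x.2‖ with h | h <;> rw [Prod.norm_def, h]
    · exact E.norm_sq_le_norm_inner_add x.1 x.2
    · exact (E.norm_sq_le_norm_inner_add x.2 x.1).trans_eq (by rw [add_comm]; rfl)

/-- The adjoint graph as a submodule. -/
def adjSub (G : Submodule ℂ (E.carrier × E.carrier)) : Submodule ℂ (E.carrier × E.carrier) where
  carrier := adjointGraph E E G
  add_mem' := fun hq hq' p hp => by
    simp only [Prod.fst_add, Prod.snd_add, E.inner_add_right, hq p hp, hq' p hp]
  zero_mem' := fun p _ => (map_zero (E.innerL p.2)).trans (map_zero (E.innerL p.1)).symm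
  smul_mem' := fun c q hq p hp => by
    simp only [Prod.smul_fst, Prod.smul_snd, E.inner_smul_right, hq p hp]

variable {G : Submodule ℂ (E.carrier × E.carrier)}

lemma coe_adjSub : (adjSub G : Set (E.carrier × E.carrier)) = adjointGraph E E G := rfl

lemma isFormalAdjoint_adjSub : IsFormalAdjoint E.innerL G (adjSub G) :=
  fun p hp _ hq => hq p hp

lemma isClosed_adjointGraph (G : Set (E.carrier × E.carrier)) :
    IsClosed (adjointGraph E E G) := by
  simp only [adjointGraph, Set.ofPred_forall, ← E.innerL_apply]
  exact isClosed_biInter fun p _ => isClosed_eq (by fun_prop) (by fun_prop)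

lemma shiftRange_offdiag_adjSub_eq_top_of_sq (hG : IsRegular E E G) {σ : ℝ} (hσ : σ ^ 2 = 1) :
    shiftRange σ (offdiag G (adjSub G)) = ⊤ := by
  set R := shiftRange σ (offdiag G (adjSub G))
  obtain ⟨⟨-, hclosed, -, hdom⟩, hrange⟩ := hG
  have hRclosed : IsClosed (R : Set (E.carrier × E.carrier)) :=
    (isDefinite_pairForm_innerL.shiftBounded
      (isFormalAdjoint_adjSub.offdiag isDefinite_innerL)).isClosed_shiftRange
      (isClosed_offdiag hclosed (isClosed_adjointGraph _)) (by rintro rfl; norm_num at hσ)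
  have hσI : ((σ : ℂ) * Complex.I) * ((σ : ℂ) * Complex.I) = -1 := by
    rw [mul_mul_mul_comm, Complex.I_mul_I, ← sq, ← Complex.ofReal_pow, hσ]; simp
  have hleft (v : E.carrier) : (v, 0) ∈ R := by
    refine hrange.induction (P := fun v => (v, 0) ∈ R) ?_ (hRclosed.preimage (by fun_prop)) v
    rintro _ ⟨x, y, z, hxy, hyz, rfl⟩
    have hp : (((-((σ : ℂ) * Complex.I)) • x, y), (z, (-((σ : ℂ) * Complex.I)) • y)) ∈
        offdiag G (adjSub G) := ⟨G.smul_mem _ hxy, hyz⟩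
    refine ⟨_, hp, Prod.ext ?_ ?_⟩
    · simp [shift_apply, smul_smul, hσI, add_comm]
    · simp [shift_apply]
  have hright (v : E.carrier) : (0, v) ∈ R := by
    refine hdom.induction (P := fun v => (0, v) ∈ R) ?_ (hRclosed.preimage (by fun_prop)) v
    rintro _ ⟨q, hq, rfl⟩
    have hmem : (q.2, ((σ : ℂ) * Complex.I) • q.1) ∈ R :=
      ⟨((0, q.1), (q.2, 0)), ⟨G.zero_mem, hq⟩, by simp [shift_apply]⟩
    have := R.smul_mem (-((σ : ℂ) * Complex.I)) (R.sub_mem hmem (hleft q.2))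
    simpa [smul_smul, hσI] using this
  exact Submodule.eq_top_iff'.2 fun v => by simpa using R.add_mem (hleft v.1) (hright v.2)

lemma shiftRange_offdiag_adjSub_eq_top (hG : IsRegular E E G) {μ : ℝ} (hμ : μ ≠ 0) :
    shiftRange μ (offdiag G (adjSub G)) = ⊤ :=
  (isDefinite_pairForm_innerL.shiftBounded
    (isFormalAdjoint_adjSub.offdiag isDefinite_innerL)).shiftRange_eq_top_of_neg
    (isClosed_offdiag hG.1.2.1 (isClosed_adjointGraph _)) one_ne_zero
    (shiftRange_offdiag_adjSub_eq_top_of_sq hG (by norm_num))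
    (shiftRange_offdiag_adjSub_eq_top_of_sq hG (by norm_num)) hμ

lemma shiftRange_eq_top_of_isSelfAdjointGraph (hsa : IsSelfAdjointGraph E G)
    (hG : IsRegular E E G) {μ : ℝ} (hμ : μ ≠ 0) : shiftRange μ G = ⊤ := by
  have hadj : adjSub G = G := SetLike.coe_injective hsa
  have := shiftRange_offdiag_adjSub_eq_top hG hμ
  rw [hadj] at this
  exact shiftRange_eq_top_of_offdiag_self this

lemma adjSub_eq_of_shiftRange_offdiag {G₁ : Submodule ℂ (E.carrier × E.carrier)}
    (h : IsFormalAdjoint E.innerL G G₁)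
    (htop : ∀ μ : ℝ, μ ≠ 0 → shiftRange μ (offdiag G G₁) = ⊤) : adjSub G = G₁ := by
  refine le_antisymm (fun q hq => ?_) fun q hq p hp => h p hp q hq
  have hmem : ((0, q.1), (q.2, 0)) ∈ offdiag G G₁ :=
    isDefinite_pairForm_innerL.mem_of_forall_eq (h.offdiag isDefinite_innerL)
      (htop 1 one_ne_zero) (htop (-1) (neg_ne_zero.2 one_ne_zero)) fun p hp => by
        rw [pairForm_apply, pairForm_apply, map_zero, map_zero, zero_add, add_zero]
        exact hq _ hp.1
  exact hmem.2

lemma exists_add_eq_of_shiftRange_offdiag (h : shiftRange 1 (offdiag G (adjSub G)) = ⊤)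
    (w : E.carrier) : ∃ x y z, (x, y) ∈ G ∧ (y, z) ∈ adjointGraph E E G ∧ w = x + z := by
  obtain ⟨p, ⟨hG, hadj⟩, hpw⟩ := exists_shift_eq h (Complex.I • w, 0)
  have hfst : p.2.1 + Complex.I • p.1.1 = Complex.I • w := by
    simpa [shift_apply] using congrArg Prod.fst hpw
  have hsnd : p.2.2 + Complex.I • p.1.2 = 0 := by
    simpa [shift_apply] using congrArg Prod.snd hpw
  refine ⟨p.1.1, p.2.2, -Complex.I • p.2.1, hG, ?_, ?_⟩
  · rw [eq_neg_of_add_eq_zero_left hsnd, ← neg_smul]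
    exact (adjSub G).smul_mem (-Complex.I) hadj
  · rw [eq_sub_of_add_eq hfst, smul_sub, smul_smul, smul_smul]
    simp

end Regular

/-! ### Yosida approximants -/

section Yosida

variable {X : Type*} [NormedAddCommGroup X] [NormedSpace ℂ X]

/-- `J μ = iμ(D + iμ)⁻¹`, for the operator `D` with graph `S`: contractions which converge strongly
to the identity as `|μ| → ∞` and have range in the domain of `D`. -/
structure IsYosida (S : Submodule ℂ (X × X)) (J : ℝ → X →L[ℂ] X) : Prop where
  mem : ∀ {μ : ℝ}, μ ≠ 0 → ∀ x, (J μ x, ((μ : ℂ) * Complex.I) • (x - J μ x)) ∈ S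
  apply_shift : ∀ {μ : ℝ}, μ ≠ 0 → ∀ p ∈ S, J μ (shift μ p) = ((μ : ℂ) * Complex.I) • p.1
  norm_le : ∀ {μ : ℝ}, μ ≠ 0 → ∀ x, ‖J μ x‖ ≤ ‖x‖

variable {S : Submodule ℂ (X × X)} {J : ℝ → X →L[ℂ] X} {μ m n : ℝ}

lemma ShiftBounded.injective_shift_comp_subtype (hS : ShiftBounded 1 S) (hμ : μ ≠ 0) :
    Function.Injective ((shift μ : X × X →L[ℂ] X).toLinearMap ∘ₗ S.subtype) := by
  refine (injective_iff_map_eq_zero _).2 fun p hp => Subtype.ext ?_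
  have hshift : shift μ (p : X × X) = 0 := hp
  have hfst : (p : X × X).1 = 0 := by
    have := hS p p.2 μ
    rw [hshift, norm_zero, mul_zero] at this
    exact norm_eq_zero.1 (by nlinarith [abs_pos.2 hμ, norm_nonneg (p : X × X).1])
  exact Prod.ext hfst (by simpa [shift_apply, hfst] using hshift)

lemma exists_isYosida (hS : ShiftBounded 1 S)
    (h : ∀ μ : ℝ, μ ≠ 0 → shiftRange μ S = ⊤) : ∃ J, IsYosida S J := by
  have (μ : ℝ) : ∃ L : X →L[ℂ] X, μ ≠ 0 → (∀ p ∈ S, L (shift μ p) = ((μ : ℂ) * Complex.I) • p.1) ∧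
      ∀ x, ‖L x‖ ≤ ‖x‖ := by
    by_cases hμ : μ = 0
    · exact ⟨0, fun h0 => absurd hμ h0⟩
    let e := LinearEquiv.ofBijective _ ⟨hS.injective_shift_comp_subtype hμ, fun v => by
      obtain ⟨p, hp, hpv⟩ := exists_shift_eq (h μ hμ) v
      exact ⟨⟨p, hp⟩, hpv⟩⟩
    let L := ((μ : ℂ) * Complex.I) • (LinearMap.fst ℂ X X ∘ₗ S.subtype ∘ₗ e.symm.toLinearMap)
    have hL (p) (hp : p ∈ S) : L (shift μ p) = ((μ : ℂ) * Complex.I) • p.1 := by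
      have he : e.symm (shift μ p) = ⟨p, hp⟩ := e.symm_apply_eq.2 rfl
      simp [L, he]
    have hnorm (x : X) : ‖L x‖ ≤ 1 * ‖x‖ := by
      obtain ⟨p, hp, rfl⟩ := exists_shift_eq (h μ hμ) x
      rw [hL p hp, norm_ofReal_mul_I_smul]
      exact hS p hp μ
    exact ⟨L.mkContinuous 1 hnorm, fun _ => ⟨hL, fun x => (hnorm x).trans_eq (one_mul _)⟩⟩
  choose J hJ using this
  refine ⟨J, fun {μ} hμ x => ?_, fun hμ => (hJ _ hμ).1, fun hμ => (hJ _ hμ).2⟩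
  obtain ⟨p, hp, rfl⟩ := exists_shift_eq (h μ hμ) x
  rw [(hJ μ hμ).1 p hp]
  rw [show shift μ p - ((μ : ℂ) * Complex.I) • p.1 = p.2 by rw [shift_apply, add_sub_cancel_right]]
  exact S.smul_mem ((μ : ℂ) * Complex.I) hp

lemma ofReal_mul_I_ne_zero (hμ : μ ≠ 0) : (μ : ℂ) * Complex.I ≠ 0 := by simpa using hμ

namespace IsYosida

lemma apply_snd (hJ : IsYosida S J) (hμ : μ ≠ 0) {p : X × X} (hp : p ∈ S) :
    J μ p.2 = ((μ : ℂ) * Complex.I) • (p.1 - J μ p.1) := by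
  rw [smul_sub, ← hJ.apply_shift hμ p hp, shift_apply, map_add, map_smul, add_sub_cancel_right]

lemma map_mem (hJ : IsYosida S J) (hμ : μ ≠ 0) {p : X × X} (hp : p ∈ S) :
    (J μ p.1, J μ p.2) ∈ S :=
  hJ.apply_snd hμ hp ▸ hJ.mem hμ p.1

lemma commute (hJ : IsYosida S J) (hm : m ≠ 0) (hn : n ≠ 0) (x : X) :
    J m (J n x) = J n (J m x) := by
  have h := hJ.apply_shift hn _ (hJ.map_mem hm (hJ.mem hn x))
  have hshift : shift n (J m (J n x), J m (((n : ℂ) * Complex.I) • (x - J n x))) =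
      ((n : ℂ) * Complex.I) • J m x := by
    rw [shift_apply, map_smul, map_sub, smul_sub, sub_add_cancel]
  rw [hshift, map_smul] at h
  exact (smul_right_injective X (ofReal_mul_I_ne_zero hn) h).symm

lemma abs_mul_norm_sub_le (hJ : IsYosida S J) (hμ : μ ≠ 0) {p : X × X} (hp : p ∈ S) :
    |μ| * ‖p.1 - J μ p.1‖ ≤ ‖p.2‖ := by
  rw [← norm_ofReal_mul_I_smul, ← hJ.apply_snd hμ hp]
  exact hJ.norm_le hμ _

lemma norm_sub_le (hJ : IsYosida S J) (hμ : μ ≠ 0) (x : X) : ‖x - J μ x‖ ≤ 2 * ‖x‖ := by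
  linarith [_root_.norm_sub_le x (J μ x), hJ.norm_le hμ x]

lemma form_apply_left {Z : Type*} [NormedAddCommGroup Z] [NormedSpace ℂ Z]
    {F : X →L⋆[ℂ] X →L[ℂ] Z} (hJ : IsYosida S J) (hS : IsFormalAdjoint F S S) (hμ : μ ≠ 0)
    (x y : X) : F (J μ x) y = F x (J (-μ) y) := by
  have h := hS _ (hJ.mem hμ x) _ (hJ.mem (neg_ne_zero.2 hμ) y)
  have hF : -(((μ : ℂ) * Complex.I) • F x (J (-μ) y)) =
      -(((μ : ℂ) * Complex.I) • F (J μ x) y) := by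
    simpa [smul_sub] using h
  exact (smul_right_injective Z (ofReal_mul_I_ne_zero hμ) (neg_injective hF)).symm

lemma tendsto (hJ : IsYosida S J) (hS : Dense (Prod.fst '' (S : Set (X × X)))) (x : X) :
    Filter.Tendsto (fun μ => J μ x) (Bornology.cobounded ℝ) (nhds x) := by
  refine Metric.tendsto_nhds.2 fun ε hε => ?_
  obtain ⟨_, hpx, p, hp, rfl⟩ := Metric.dense_iff.1 hS x (ε / 4) (by positivity)
  have hlim : Filter.Tendsto (fun μ : ℝ => ‖p.2‖ / |μ|) (Bornology.cobounded ℝ) (nhds 0) :=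
    tendsto_const_nhds.div_atTop tendsto_norm_cobounded_atTop
  filter_upwards [hlim.eventually_lt_const (half_pos hε), Bornology.eventually_ne_cobounded 0]
    with μ hμp hμ
  have hp' : ‖p.1 - J μ p.1‖ ≤ ‖p.2‖ / |μ| :=
    (le_div_iff₀' (abs_pos.2 hμ)).2 (hJ.abs_mul_norm_sub_le hμ hp)
  have hsub := hJ.norm_sub_le hμ (x - p.1)
  rw [← dist_eq_norm x p.1, dist_comm] at hsub
  calc dist (J μ x) x = ‖(x - p.1 - J μ (x - p.1)) + (p.1 - J μ p.1)‖ := by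
        rw [dist_comm, dist_eq_norm, map_sub]; congr 1; abel
    _ ≤ ‖x - p.1 - J μ (x - p.1)‖ + ‖p.1 - J μ p.1‖ := norm_add_le _ _
    _ < ε := by linarith [Metric.mem_ball.1 hpx]

end IsYosida

/-- The cutoff `m²(D² + m²)⁻¹`, for `J` the Yosida approximants of `D`. -/
def cutoff (J : ℝ → X →L[ℂ] X) (m : ℝ) : X →L[ℂ] X := J (-m) ∘L J m

/-- The bounded approximant `m² D(D² + m²)⁻¹` of the operator `D` with Yosida approximants `J`. -/
noncomputable def truncate (J : ℝ → X →L[ℂ] X) (m : ℝ) : X →L[ℂ] X :=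
  J (-m) ∘L (((m : ℂ) * Complex.I) • (1 - J m))

lemma cutoff_apply (x : X) : cutoff J m x = J (-m) (J m x) := rfl

lemma truncate_apply (x : X) :
    truncate J m x = J (-m) (((m : ℂ) * Complex.I) • (x - J m x)) := rfl

namespace IsYosida

lemma cutoff_truncate_mem (hJ : IsYosida S J) (hm : m ≠ 0) (x : X) :
    (cutoff J m x, truncate J m x) ∈ S :=
  hJ.map_mem (neg_ne_zero.2 hm) (hJ.mem hm x)

lemma truncate_fst (hJ : IsYosida S J) (hm : m ≠ 0) {p : X × X} (hp : p ∈ S) :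
    truncate J m p.1 = cutoff J m p.2 := by
  rw [truncate_apply, cutoff_apply, hJ.apply_snd hm hp]

lemma truncate_cutoff (hJ : IsYosida S J) (hm : m ≠ 0) (hn : n ≠ 0) (x : X) :
    truncate J m (cutoff J n x) = cutoff J n (truncate J m x) := by
  simp only [truncate_apply, cutoff_apply, map_smul, map_sub, hJ.commute hm hn,
    hJ.commute hm (neg_ne_zero.2 hn), hJ.commute (neg_ne_zero.2 hm) hn,
    hJ.commute (neg_ne_zero.2 hm) (neg_ne_zero.2 hn)]

lemma form_truncate_left {Z : Type*} [NormedAddCommGroup Z] [NormedSpace ℂ Z]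
    {F : X →L⋆[ℂ] X →L[ℂ] Z} (hJ : IsYosida S J) (hS : IsFormalAdjoint F S S) (hm : m ≠ 0)
    (x y : X) : F (truncate J m x) y = F x (truncate J m y) := by
  have hy := hJ.apply_snd (neg_ne_zero.2 hm) (hJ.mem hm y)
  rw [truncate_apply, truncate_apply, hy, hJ.form_apply_left hS (neg_ne_zero.2 hm), neg_neg]
  simp [hJ.form_apply_left hS hm]

lemma tendsto_cutoff (hJ : IsYosida S J) (hS : Dense (Prod.fst '' (S : Set (X × X)))) (x : X) :
    Filter.Tendsto (fun m => cutoff J m x) (Bornology.cobounded ℝ) (nhds x) := by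
  have hneg := (hJ.tendsto hS x).comp Filter.tendsto_neg_cobounded
  rw [tendsto_iff_norm_sub_tendsto_zero] at hneg ⊢
  refine squeeze_zero' (.of_forall fun _ => norm_nonneg _) ?_
    (by simpa using (tendsto_iff_norm_sub_tendsto_zero.1 (hJ.tendsto hS x)).add hneg)
  filter_upwards [Bornology.eventually_ne_cobounded 0] with m hm
  calc ‖cutoff J m x - x‖ = ‖J (-m) (J m x - x) + (J (-m) x - x)‖ := by
        rw [cutoff_apply, map_sub, sub_add_sub_cancel]
    _ ≤ ‖J m x - x‖ + ‖J (-m) x - x‖ :=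
        norm_add_le_of_le (hJ.norm_le (neg_ne_zero.2 hm) _) le_rfl

lemma norm_sub_cutoff_le (hJ : IsYosida S J) (hn : 0 < n) {p : X × X} (hp : p ∈ S) :
    ‖p.1 - cutoff J n p.1‖ ≤ 2 / n * ‖p.2‖ := by
  have hn' := neg_ne_zero.2 hn.ne'
  have hpos := hJ.abs_mul_norm_sub_le hn.ne' hp
  have hneg := hJ.abs_mul_norm_sub_le hn' hp
  rw [abs_neg, abs_of_pos hn] at hneg
  rw [abs_of_pos hn] at hpos
  rw [div_mul_eq_mul_div, le_div_iff₀ hn]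
  calc ‖p.1 - cutoff J n p.1‖ * n
      ≤ (‖p.1 - J (-n) p.1‖ + ‖J (-n) (p.1 - J n p.1)‖) * n := by
        gcongr
        rw [map_sub, cutoff_apply]
        exact norm_sub_le_norm_sub_add_norm_sub ..
    _ ≤ (‖p.1 - J (-n) p.1‖ + ‖p.1 - J n p.1‖) * n := by gcongr; exact hJ.norm_le hn' _
    _ ≤ 2 * ‖p.2‖ := by linarith

lemma norm_truncate_sub_cutoff_le (hJ : IsYosida S J) (hm : m ≠ 0) (hn : 0 < n) (x : X) :
    ‖truncate J m x - cutoff J n (truncate J m x)‖ ≤ 8 * m ^ 2 / n * ‖x‖ := by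
  set z := ((m : ℂ) * Complex.I) • (x - J m x)
  have hz : ‖z‖ ≤ |m| * (2 * ‖x‖) := by
    rw [norm_ofReal_mul_I_smul]; gcongr; exact hJ.norm_sub_le hm x
  calc ‖truncate J m x - cutoff J n (truncate J m x)‖
      ≤ 2 / n * ‖(((-m : ℝ) : ℂ) * Complex.I) • (z - J (-m) z)‖ :=
        hJ.norm_sub_cutoff_le hn (hJ.mem (neg_ne_zero.2 hm) z)
    _ ≤ 2 / n * (|m| * (2 * (|m| * (2 * ‖x‖)))) := by
        rw [norm_ofReal_mul_I_smul, abs_neg]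
        gcongr
        exact (hJ.norm_sub_le (neg_ne_zero.2 hm) z).trans (by gcongr)
    _ = 8 * m ^ 2 / n * ‖x‖ := by rw [← sq_abs m]; ring

end IsYosida

end Yosida

/-! ### Sums of weakly anticommuting relations -/

section Sum

variable {X Z : Type*} [NormedAddCommGroup X] [NormedSpace ℂ X] [NormedAddCommGroup Z]
  [NormedSpace ℂ Z]

/-- The graph of `x ↦ (S x, T x)` on `dom S ∩ dom T`, where `S`, `T` are identified with their
graphs. -/
def jointGraph (S T : Submodule ℂ (X × X)) : Submodule ℂ (X × X × X) where
  carrier := {v | (v.1, v.2.1) ∈ S ∧ (v.1, v.2.2) ∈ T}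
  add_mem' := fun hv hw => ⟨S.add_mem hv.1 hw.1, T.add_mem hv.2 hw.2⟩
  zero_mem' := ⟨S.zero_mem, T.zero_mem⟩
  smul_mem' := fun c _ hv => ⟨S.smul_mem c hv.1, T.smul_mem c hv.2⟩

/-- The map `(x, y, z) ↦ (x, y + z)`, which carries the joint graph to the graph of the sum. -/
noncomputable def sumMap : X × X × X →L[ℂ] X × X :=
  (ContinuousLinearMap.fst ℂ X (X × X)).prod
    ((ContinuousLinearMap.fst ℂ X X + ContinuousLinearMap.snd ℂ X X) ∘L
      ContinuousLinearMap.snd ℂ X (X × X))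

/-- The graph of `S + T` on `dom S ∩ dom T`. -/
noncomputable def sumSub (S T : Submodule ℂ (X × X)) : Submodule ℂ (X × X) :=
  (jointGraph S T).map (sumMap : X × X × X →L[ℂ] X × X).toLinearMap

variable {S T T' : Submodule ℂ (X × X)} {J : ℝ → X →L[ℂ] X} {F : X →L⋆[ℂ] X →L[ℂ] Z}
  {c c' m n μ : ℝ}

lemma isClosed_jointGraph (hS : IsClosed (S : Set (X × X))) (hT : IsClosed (T : Set (X × X))) :
    IsClosed (jointGraph S T : Set (X × X × X)) :=
  (hS.preimage (by fun_prop : Continuous fun v : X × X × X => (v.1, v.2.1))).inter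
    (hT.preimage (by fun_prop : Continuous fun v : X × X × X => (v.1, v.2.2)))

lemma add_mem_sumSub {x y z : X} (hy : (x, y) ∈ S) (hz : (x, z) ∈ T) :
    (x, y + z) ∈ sumSub S T :=
  ⟨(x, y, z), ⟨hy, hz⟩, rfl⟩

lemma IsFormalAdjoint.sumSub (hS : IsFormalAdjoint F S S) (hT : IsFormalAdjoint F T T') :
    IsFormalAdjoint F (sumSub S T) (sumSub S T') := by
  rintro _ ⟨v, ⟨hv, hv'⟩, rfl⟩ _ ⟨w, ⟨hw, hw'⟩, rfl⟩
  change F (v.2.1 + v.2.2) w.1 = F v.1 (w.2.1 + w.2.2)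
  rw [map_add, map_add, add_apply, hS _ hv _ hw, hT _ hv' _ hw']

/-- The hypothesis on the anticommutator of the operators `S`, `T`, identified with their graphs:
`(S + iμ)⁻¹` maps `dom T` into `dom T ∩ dom (ST)`, and `R` extends `(ST + TS)(S + i)⁻¹`. A vector
`(S + iμ)⁻¹ x` is encoded as a `y` with `(y, w) ∈ S` and `w + iμ y = x`. -/
structure IsAnticommutatorExtension (S T : Set (X × X)) (R : X →L[ℂ] X) : Prop where
  resolvent_mem : ∀ μ : ℝ, μ ≠ 0 → ∀ x ∈ Prod.fst '' T, ∀ y w, (y, w) ∈ S →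
    w + ((μ : ℂ) * Complex.I) • y = x →
    y ∈ Prod.fst '' T ∧ ∀ ty, (y, ty) ∈ T → ty ∈ Prod.fst '' S
  apply_eq : ∀ x ∈ Prod.fst '' T, ∀ y w, (y, w) ∈ S → w + Complex.I • y = x →
    ∀ ty sty tw, (y, ty) ∈ T → (ty, sty) ∈ S → (w, tw) ∈ T → R x = sty + tw

/-- `S` and `T` anticommute up to an `S`-bounded remainder. Formally
`r = (ST + TS)(S + iμ)⁻¹ x`, and the last clause says `T (J μ x) = J (-μ) (T x - r)`, so that only
the Yosida approximants `J` of `S` occur. -/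
def WeaklyAnticommutes (S T : Submodule ℂ (X × X)) (J : ℝ → X →L[ℂ] X) (c : ℝ) : Prop :=
  ∀ p ∈ T, ∀ μ : ℝ, 1 ≤ |μ| → ∃ r, ‖r‖ ≤ c * ‖p.1‖ ∧
    (∀ s, (p.1, s) ∈ S → |μ| * ‖r‖ ≤ c * (‖s‖ + ‖p.1‖)) ∧ (J μ p.1, J (-μ) (p.2 - r)) ∈ T

lemma WeaklyAnticommutes.mono (h : WeaklyAnticommutes S T J c) (hc : c ≤ c') :
    WeaklyAnticommutes S T J c' := fun p hp μ hμ => by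
  obtain ⟨r, hr, hrs, hmem⟩ := h p hp μ hμ
  exact ⟨r, hr.trans (by gcongr), fun s hs => (hrs s hs).trans (by gcongr), hmem⟩

lemma ne_zero_of_one_le_abs (hμ : 1 ≤ |μ|) : μ ≠ 0 := abs_pos.1 (one_pos.trans_le hμ)

namespace IsYosida

lemma exists_smul_eq (hJ : IsYosida S J) (hμ : μ ≠ 0) (x : X) :
    ∃ y, (y, x - J μ x) ∈ S ∧ ((μ : ℂ) * Complex.I) • y = J μ x := by
  have hc := ofReal_mul_I_ne_zero hμ
  refine ⟨((μ : ℂ) * Complex.I)⁻¹ • J μ x, ?_, smul_inv_smul₀ hc _⟩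
  rw [← inv_smul_smul₀ hc (x - J μ x)]
  exact S.smul_mem _ (hJ.mem hμ x)

lemma exists_apply_mem (hJ : IsYosida S J) {R : X →L[ℂ] X}
    (hR : IsAnticommutatorExtension S T R) (hμ : μ ≠ 0) {p : X × X} (hp : p ∈ T) :
    ∃ y, ((μ : ℂ) * Complex.I) • y = J μ p.1 ∧
      (J μ p.1, J (-μ) (p.2 - R (p.1 - J μ p.1 + Complex.I • y))) ∈ T := by
  obtain ⟨y, hy, hcy⟩ := hJ.exists_smul_eq hμ p.1
  set w := p.1 - J μ p.1
  have hwy : w + ((μ : ℂ) * Complex.I) • y = p.1 := by rw [hcy, sub_add_cancel]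
  obtain ⟨⟨q, hq, hqy⟩, hdomS⟩ := hR.resolvent_mem μ hμ p.1 ⟨p, hp, rfl⟩ y w hy hwy
  have hty : (y, q.2) ∈ T := hqy ▸ hq
  obtain ⟨r, hr, hrq⟩ := hdomS q.2 hty
  have hsty : (q.2, r.2) ∈ S := hrq ▸ hr
  have htw : (w, p.2 - ((μ : ℂ) * Complex.I) • q.2) ∈ T := by
    rw [eq_sub_of_add_eq hwy]
    exact T.sub_mem hp (T.smul_mem _ hty)
  have hRw : R (w + Complex.I • y) = r.2 + (p.2 - ((μ : ℂ) * Complex.I) • q.2) :=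
    hR.apply_eq _ ⟨_, T.add_mem htw (T.smul_mem Complex.I hty), rfl⟩ y w hy rfl _ _ _ hty hsty htw
  have hJR : J (-μ) (p.2 - R (w + Complex.I • y)) = ((μ : ℂ) * Complex.I) • q.2 :=
    calc J (-μ) (p.2 - R (w + Complex.I • y)) = -J (-μ) (shift (-μ) (q.2, r.2)) := by
          rw [hRw, ← map_neg, shift_apply]; congr 1; push_cast; module
      _ = ((μ : ℂ) * Complex.I) • q.2 := by
          rw [hJ.apply_shift (neg_ne_zero.2 hμ) _ hsty]; push_cast; module
  refine ⟨y, hcy, ?_⟩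
  rw [hJR, ← hcy]
  exact T.smul_mem _ hty

lemma weaklyAnticommutes (hJ : IsYosida S J) {R : X →L[ℂ] X}
    (hR : IsAnticommutatorExtension S T R) :
    WeaklyAnticommutes S T J (3 * ‖R‖) := by
  intro p hp μ hμ
  have hμ0 := ne_zero_of_one_le_abs hμ
  obtain ⟨y, hcy, hmem⟩ := hJ.exists_apply_mem hR hμ0 hp
  set w := p.1 - J μ p.1
  have hyle : |μ| * ‖y‖ ≤ ‖p.1‖ := by
    rw [← norm_ofReal_mul_I_smul, hcy]
    exact hJ.norm_le hμ0 _
  have hnorm : ‖w + Complex.I • y‖ ≤ ‖w‖ + ‖y‖ :=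
    (norm_add_le _ _).trans_eq (by rw [norm_smul, Complex.norm_I, one_mul])
  refine ⟨R (w + Complex.I • y), ?_, fun s hs => ?_, hmem⟩
  · calc ‖R (w + Complex.I • y)‖ ≤ ‖R‖ * (2 * ‖p.1‖ + ‖p.1‖) := by
          refine R.le_opNorm_of_le (hnorm.trans (add_le_add (hJ.norm_sub_le hμ0 _) ?_))
          exact (le_mul_of_one_le_left (norm_nonneg y) hμ).trans hyle
      _ = 3 * ‖R‖ * ‖p.1‖ := by ring
  · calc |μ| * ‖R (w + Complex.I • y)‖ ≤ |μ| * (‖R‖ * (‖w‖ + ‖y‖)) := by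
          gcongr; exact R.le_opNorm_of_le hnorm
      _ = ‖R‖ * (|μ| * ‖w‖ + |μ| * ‖y‖) := by ring
      _ ≤ ‖R‖ * (‖s‖ + ‖p.1‖) := by gcongr; exact hJ.abs_mul_norm_sub_le hμ0 hs
      _ ≤ 3 * ‖R‖ * (‖s‖ + ‖p.1‖) := by gcongr; linarith [norm_nonneg R]

end IsYosida

namespace WeaklyAnticommutes

lemma exists_cutoff_mem (h : WeaklyAnticommutes S T J c) (hJ : IsYosida S J) (hc : 0 ≤ c)
    (hm : 1 ≤ |m|) {p : X × X} (hp : p ∈ T) :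
    ∃ e, ‖e‖ ≤ 2 * c * ‖p.1‖ ∧ (cutoff J m p.1, cutoff J m p.2 + e) ∈ T := by
  have hm0 := ne_zero_of_one_le_abs hm
  obtain ⟨r, hr, -, hmem⟩ := h p hp m hm
  obtain ⟨r', hr', -, hmem'⟩ := h _ hmem (-m) (by rwa [abs_neg])
  rw [neg_neg] at hmem'
  refine ⟨-J m (J (-m) r + r'), ?_, ?_⟩
  · calc ‖-J m (J (-m) r + r')‖ ≤ ‖J (-m) r + r'‖ := by rw [norm_neg]; exact hJ.norm_le hm0 _
      _ ≤ ‖r‖ + c * ‖J m p.1‖ := norm_add_le_of_le (hJ.norm_le (neg_ne_zero.2 hm0) _) hr'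
      _ ≤ c * ‖p.1‖ + c * ‖p.1‖ := by gcongr; exact hJ.norm_le hm0 _
      _ = 2 * c * ‖p.1‖ := by ring
  · have hcut : cutoff J m p.2 + -J m (J (-m) r + r') = J m (J (-m) (p.2 - r) - r') := by
      rw [cutoff_apply, hJ.commute (neg_ne_zero.2 hm0) hm0]
      simp only [map_sub, map_add]
      abel
    rwa [hcut]

lemma exists_cutoff_mem_sumSub (h : WeaklyAnticommutes S T J c) (hJ : IsYosida S J)
    (hc : 0 ≤ c) (hm : 1 ≤ |m|) (hn : 0 < n) {p : X × X} (hp : p ∈ perturb T (truncate J n)) :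
    ∃ g, (cutoff J m p.1, g) ∈ sumSub S T ∧
      ‖cutoff J m p.2 - g‖ ≤ (8 * m ^ 2 / n + 2 * c) * ‖p.1‖ := by
  have hm0 := ne_zero_of_one_le_abs hm
  have hmem := hJ.cutoff_truncate_mem hm0 p.1
  obtain ⟨e, he, hTe⟩ := h.exists_cutoff_mem hJ hc hm (mem_perturb.1 hp)
  have hcomm : cutoff J m (truncate J n p.1) = cutoff J n (truncate J m p.1) := by
    rw [← hJ.truncate_cutoff hn.ne' hm0, ← hJ.truncate_fst hn.ne' hmem]
  refine ⟨_, add_mem_sumSub hmem hTe, ?_⟩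
  calc ‖cutoff J m p.2 - (truncate J m p.1 + (cutoff J m (p.2 - truncate J n p.1) + e))‖
      = ‖truncate J m p.1 - cutoff J n (truncate J m p.1) + e‖ := by
        rw [← norm_neg, map_sub, hcomm]; congr 1; abel
    _ ≤ 8 * m ^ 2 / n * ‖p.1‖ + 2 * c * ‖p.1‖ :=
        norm_add_le_of_le (hJ.norm_truncate_sub_cutoff_le hm0 hn _) he
    _ = (8 * m ^ 2 / n + 2 * c) * ‖p.1‖ := by ring

lemma dense_image_fst_sumSub (h : WeaklyAnticommutes S T J c) (hJ : IsYosida S J)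
    (hS : Dense (Prod.fst '' (S : Set (X × X)))) (hT : Dense (Prod.fst '' (T : Set (X × X)))) :
    Dense (Prod.fst '' (sumSub S T : Set (X × X))) := by
  refine (hT.mono ?_).of_closure
  rintro _ ⟨p, hp, rfl⟩
  refine mem_closure_of_tendsto (hJ.tendsto hS p.1) ?_
  filter_upwards [tendsto_norm_cobounded_atTop.eventually_ge_atTop 1] with μ hμ
  obtain ⟨r, -, -, hmem⟩ := h p hp μ hμ
  exact ⟨_, add_mem_sumSub (hJ.mem (ne_zero_of_one_le_abs hμ) p.1) hmem, rfl⟩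

end WeaklyAnticommutes

lemma exists_mem_offdiag_sumSub (hJ : IsYosida S J) (hT : WeaklyAnticommutes S T J c)
    (hT' : WeaklyAnticommutes S T' J c) (hc : 0 ≤ c) (hm : 1 ≤ |m|) (hn : 0 < n)
    {p : (X × X) × (X × X)}
    (hp : p ∈ offdiag (perturb T (truncate J n)) (perturb T' (truncate J n))) :
    ∃ g, ((cutoff J m).prodMap (cutoff J m) p.1, g) ∈ offdiag (sumSub S T) (sumSub S T') ∧
      ‖(cutoff J m).prodMap (cutoff J m) p.2 - g‖ ≤ (8 * m ^ 2 / n + 2 * c) * ‖p.1‖ := by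
  obtain ⟨g₀, hg₀, hle₀⟩ := hT.exists_cutoff_mem_sumSub hJ hc hm hn hp.1
  obtain ⟨g₁, hg₁, hle₁⟩ := hT'.exists_cutoff_mem_sumSub hJ hc hm hn hp.2
  refine ⟨(g₁, g₀), ⟨hg₀, hg₁⟩, max_le (hle₁.trans ?_) (hle₀.trans ?_)⟩ <;> gcongr
  exacts [norm_snd_le p.1, norm_fst_le p.1]

lemma exists_norm_sub_cutoff_prod_le (hJ : IsYosida S J)
    (hS : Dense (Prod.fst '' (S : Set (X × X)))) (v : X × X) {ε : ℝ} (hε : 0 < ε) :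
    ∃ m : ℝ, 1 ≤ |m| ∧ ‖v - (cutoff J m).prodMap (cutoff J m) v‖ ≤ ε := by
  have hlim := (hJ.tendsto_cutoff hS v.1).prodMk_nhds (hJ.tendsto_cutoff hS v.2)
  obtain ⟨m, hm, hv⟩ := ((tendsto_norm_cobounded_atTop.eventually_ge_atTop 1).and
    (Metric.tendsto_nhds.1 hlim ε hε)).exists
  exact ⟨m, hm, by rw [norm_sub_rev]; exact (dist_eq_norm _ v ▸ hv).le⟩

lemma exists_shiftRange_sumSub_norm_sub_le (hJ : IsYosida S J)
    (hS : Dense (Prod.fst '' (S : Set (X × X)))) (hT : WeaklyAnticommutes S T J c)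
    (hT' : WeaklyAnticommutes S T' J c) (hc : 0 ≤ c) {C : ℝ}
    (hC : ∀ n : ℝ, 0 < n → ShiftBounded C
      (offdiag (perturb T (truncate J n)) (perturb T' (truncate J n))))
    (htop : ∀ n : ℝ, 0 < n →
      shiftRange μ (offdiag (perturb T (truncate J n)) (perturb T' (truncate J n))) = ⊤)
    (hμ0 : μ ≠ 0) (hμ : 4 * (C * (1 + 2 * c)) ≤ |μ|) (v : X × X) :
    ∃ u ∈ shiftRange μ (offdiag (sumSub S T) (sumSub S T')), ‖v - u‖ ≤ 1 / 2 * ‖v‖ := by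
  rcases eq_or_ne v 0 with rfl | hv
  · exact ⟨0, zero_mem _, by simp⟩
  obtain ⟨m, hm, hvm⟩ := exists_norm_sub_cutoff_prod_le hJ hS v
    (mul_pos (by norm_num : (0 : ℝ) < 1 / 4) (norm_pos_iff.2 hv))
  set D := (cutoff J m).prodMap (cutoff J m)
  have hn : 0 < 8 * m ^ 2 := by have := ne_zero_of_one_le_abs hm; positivity
  obtain ⟨p, hp, rfl⟩ := exists_shift_eq (htop _ hn) v
  obtain ⟨g, hg, hgle⟩ := exists_mem_offdiag_sumSub hJ hT hT' hc hm hn hp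
  rw [div_self hn.ne'] at hgle
  have hquarter : (1 + 2 * c) * ‖p.1‖ ≤ 1 / 4 * ‖shift μ p‖ := by
    refine le_of_mul_le_mul_left ?_ (abs_pos.2 hμ0)
    calc |μ| * ((1 + 2 * c) * ‖p.1‖) = (1 + 2 * c) * (|μ| * ‖p.1‖) := by ring
      _ ≤ (1 + 2 * c) * (C * ‖shift μ p‖) := by gcongr 1; exact hC _ hn p hp μ
      _ = 4 * (C * (1 + 2 * c)) * (1 / 4 * ‖shift μ p‖) := by ring
      _ ≤ |μ| * (1 / 4 * ‖shift μ p‖) := by gcongr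
  refine ⟨shift μ (D p.1, g), ⟨_, hg, rfl⟩, ?_⟩
  calc ‖shift μ p - shift μ (D p.1, g)‖
      = ‖(shift μ p - D (shift μ p)) + (D p.2 - g)‖ := by
        congr 1; simp only [shift_apply, map_add, map_smul]; abel
    _ ≤ 1 / 4 * ‖shift μ p‖ + (1 + 2 * c) * ‖p.1‖ := norm_add_le_of_le hvm hgle
    _ ≤ 1 / 2 * ‖shift μ p‖ := by linarith

lemma norm_form_add_form_yosida_le (hJ : IsYosida S J) (hS : IsFormalAdjoint F S S)
    (hTT : IsFormalAdjoint F T T) (hT : WeaklyAnticommutes S T J c) (hμ : 1 ≤ |μ|) {x s t : X}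
    (hs : (x, s) ∈ S) (ht : (x, t) ∈ T) :
    ‖F s (J (-μ) t) + F t (J μ s)‖ ≤ ‖F‖ * c * ‖x‖ * (‖s‖ + ‖x‖) := by
  have hμ0 := ne_zero_of_one_le_abs hμ
  have hμ0' := neg_ne_zero.2 hμ0
  obtain ⟨r, -, hrs, hmem⟩ := hT _ ht μ hμ
  have hleft : F s (J (-μ) t) = -(((μ : ℂ) * Complex.I) • (F x t - F x (J (-μ) t))) := by
    simpa using hS _ hs _ (hJ.mem hμ0' t)
  have hright : F t (J μ s) =
      ((μ : ℂ) * Complex.I) • (F x t - (F x (J (-μ) t) - F x (J (-μ) r))) := by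
    rw [hJ.apply_snd hμ0 hs, map_smul, map_sub, hTT _ ht _ ht, hTT _ ht _ hmem, map_sub, map_sub]
  calc ‖F s (J (-μ) t) + F t (J μ s)‖ = ‖((μ : ℂ) * Complex.I) • F x (J (-μ) r)‖ := by
        rw [hleft, hright]; congr 1; module
    _ ≤ |μ| * (‖F‖ * ‖x‖ * ‖r‖) := by
        rw [norm_ofReal_mul_I_smul]
        gcongr
        exact (F.le_opNorm₂ _ _).trans (by gcongr; exact hJ.norm_le hμ0' r)
    _ = ‖F‖ * ‖x‖ * (|μ| * ‖r‖) := by ring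
    _ ≤ ‖F‖ * ‖x‖ * (c * (‖s‖ + ‖x‖)) := mul_le_mul_of_nonneg_left (hrs s hs) (by positivity)
    _ = ‖F‖ * c * ‖x‖ * (‖s‖ + ‖x‖) := by ring

lemma norm_form_add_form_le (hJ : IsYosida S J) (hS : IsFormalAdjoint F S S)
    (hdense : Dense (Prod.fst '' (S : Set (X × X)))) (hTT : IsFormalAdjoint F T T)
    (hT : WeaklyAnticommutes S T J c) {x s t : X} (hs : (x, s) ∈ S) (ht : (x, t) ∈ T) :
    ‖F s t + F t s‖ ≤ ‖F‖ * c * ‖x‖ * (‖s‖ + ‖x‖) := by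
  have hlim : Filter.Tendsto (fun μ => ‖F s (J (-μ) t) + F t (J μ s)‖) (Bornology.cobounded ℝ)
      (nhds ‖F s t + F t s‖) :=
    ((((F s).continuous.tendsto t).comp
      ((hJ.tendsto hdense t).comp Filter.tendsto_neg_cobounded)).add
      (((F t).continuous.tendsto s).comp (hJ.tendsto hdense s))).norm
  refine le_of_tendsto hlim ?_
  filter_upwards [tendsto_norm_cobounded_atTop.eventually_ge_atTop 1] with μ hμ
  exact norm_form_add_form_yosida_le hJ hS hTT hT hμ hs ht

lemma norm_le_mul_norm_sumMap [Star Z] (hFF : IsDefinite (pairForm F)) (hJ : IsYosida S J)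
    (hS : IsFormalAdjoint F S S) (hdense : Dense (Prod.fst '' (S : Set (X × X))))
    (hTT : IsFormalAdjoint F T T) (hT : WeaklyAnticommutes S T J c) (hc : 0 ≤ c)
    {v : X × X × X} (hv : v ∈ jointGraph S T) :
    ‖v.2.1‖ ≤ (‖F‖ * (1 + 2 * c) + 1) * ‖sumMap v‖ := by
  obtain ⟨x, s, t⟩ := v
  obtain ⟨hs, ht⟩ := hv
  set N := ‖sumMap (x, s, t)‖
  have hx : ‖x‖ ≤ N := norm_fst_le (sumMap (x, s, t))
  have hst : ‖s + t‖ ≤ N := norm_snd_le (sumMap (x, s, t))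
  have hsq : ‖s‖ ^ 2 ≤ ‖F‖ * N ^ 2 + ‖F‖ * c * N * (‖s‖ + N) :=
    calc ‖s‖ ^ 2 ≤ ‖(s, t)‖ ^ 2 := by gcongr; exact norm_fst_le (s, t)
      _ ≤ ‖F s s + F t t‖ := hFF.norm_sq_le (s, t)
      _ = ‖F (s + t) (s + t) - (F s t + F t s)‖ := by
          congr 1; simp only [map_add, add_apply]; abel
      _ ≤ ‖F‖ * ‖s + t‖ * ‖s + t‖ + ‖F‖ * c * ‖x‖ * (‖s‖ + ‖x‖) :=
          norm_sub_le_of_le (F.le_opNorm₂ _ _) (norm_form_add_form_le hJ hS hdense hTT hT hs ht)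
      _ ≤ ‖F‖ * N * N + ‖F‖ * c * N * (‖s‖ + N) := by gcongr
      _ = ‖F‖ * N ^ 2 + ‖F‖ * c * N * (‖s‖ + N) := by ring
  have hN : 0 ≤ N := norm_nonneg _
  by_contra! hlt
  have hNs : N < ‖s‖ := by
    refine lt_of_le_of_lt (le_mul_of_one_le_left hN ?_) hlt
    linarith [mul_nonneg (norm_nonneg F) (by positivity : 0 ≤ 1 + 2 * c)]
  refine hsq.not_gt ?_
  calc ‖F‖ * N ^ 2 + ‖F‖ * c * N * (‖s‖ + N)
      ≤ ‖F‖ * (N * ‖s‖) + ‖F‖ * c * N * (‖s‖ + ‖s‖) := by rw [sq]; gcongr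
    _ = ‖F‖ * (1 + 2 * c) * N * ‖s‖ := by ring
    _ ≤ (‖F‖ * (1 + 2 * c) + 1) * N * ‖s‖ := by gcongr; linarith
    _ < ‖s‖ * ‖s‖ := by gcongr; exact hN.trans_lt hNs
    _ = ‖s‖ ^ 2 := (sq _).symm

lemma isClosed_sumSub [CompleteSpace X] [Star Z] (hFF : IsDefinite (pairForm F)) (hJ : IsYosida S J)
    (hS : IsFormalAdjoint F S S) (hdense : Dense (Prod.fst '' (S : Set (X × X))))
    (hTT : IsFormalAdjoint F T T) (hT : WeaklyAnticommutes S T J c) (hc : 0 ≤ c)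
    (hSc : IsClosed (S : Set (X × X))) (hTc : IsClosed (T : Set (X × X))) :
    IsClosed (sumSub S T : Set (X × X)) := by
  set K := ‖F‖ * (1 + 2 * c) + 1
  have hK : 1 ≤ K := le_add_of_nonneg_left (by positivity)
  refine isClosed_map_of_bound (isClosed_jointGraph hSc hTc) sumMap (c := 1 + K) fun v hv => ?_
  have hs : ‖v.2.1‖ ≤ K * ‖sumMap v‖ := norm_le_mul_norm_sumMap hFF hJ hS hdense hTT hT hc hv
  have hx : ‖v.1‖ ≤ ‖sumMap v‖ := norm_fst_le (sumMap v)
  have hst : ‖v.2.1 + v.2.2‖ ≤ ‖sumMap v‖ := norm_snd_le (sumMap v)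
  have hv0 := norm_nonneg (sumMap v)
  refine max_le ?_ (max_le ?_ ?_)
  · nlinarith
  · nlinarith
  · calc ‖v.2.2‖ = ‖(v.2.1 + v.2.2) - v.2.1‖ := by rw [add_sub_cancel_left]
      _ ≤ ‖sumMap v‖ + K * ‖sumMap v‖ := norm_sub_le_of_le hst hs
      _ = (1 + K) * ‖sumMap v‖ := by ring

section Form

variable [CompleteSpace X] [StarAddMonoid Z] [NormedStarGroup Z] [StarModule ℂ Z]

lemma shiftRange_eq_top_of_offdiag_sumSub_le (hF : IsDefinite F) (hFF : IsDefinite (pairForm F))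
    (hJ : IsYosida S J) (hS : IsFormalAdjoint F S S)
    (hdense : Dense (Prod.fst '' (S : Set (X × X)))) (hTT' : IsFormalAdjoint F T T')
    (hTc : IsClosed (T : Set (X × X))) (hTc' : IsClosed (T' : Set (X × X)))
    (htop : ∀ ν : ℝ, ν ≠ 0 → shiftRange ν (offdiag T T') = ⊤)
    (hT : WeaklyAnticommutes S T J c) (hT' : WeaklyAnticommutes S T' J c) (hc : 0 ≤ c)
    {G : Submodule ℂ ((X × X) × (X × X))} (hGc : IsClosed (G : Set ((X × X) × (X × X))))
    (hG : IsFormalAdjoint (pairForm F) G G) (hle : offdiag (sumSub S T) (sumSub S T') ≤ G)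
    (hμ : μ ≠ 0) : shiftRange μ G = ⊤ := by
  have hC := hFF.shiftBounded hG
  have hlarge (l : ℝ) (hl0 : l ≠ 0) (hl : 4 * (‖pairForm F‖ * (1 + 2 * c)) ≤ |l|) :
      shiftRange l G = ⊤ := by
    refine eq_top_of_forall_exists_norm_sub_le (hC.isClosed_shiftRange hGc hl0) one_half_lt_one
      fun v => ?_
    obtain ⟨u, hu, huv⟩ := exists_shiftRange_sumSub_norm_sub_le hJ hdense hT hT' hc
      (fun n hn => hFF.shiftBounded ((hTT'.perturb (hJ.form_truncate_left hS hn.ne')).offdiag hF))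
      (fun n hn => shiftRange_offdiag_perturb_eq_top hF hFF hTT' hTc hTc' htop
        (hJ.form_truncate_left hS hn.ne') hl0) hl0 hl v
    exact ⟨u, Submodule.map_mono hle hu, huv⟩
  set l := 4 * (‖pairForm F‖ * (1 + 2 * c)) + 1
  have hl : 0 < l := by positivity
  exact hC.shiftRange_eq_top_of_neg hGc hl.ne'
    (hlarge l hl.ne' (by rw [abs_of_pos hl]; exact (lt_add_one _).le))
    (hlarge (-l) (neg_ne_zero.2 hl.ne')
      (by rw [abs_neg, abs_of_pos hl]; exact (lt_add_one _).le)) hμ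

end Form

end Sum

section Assembly

variable {B : Type} [NonUnitalCStarAlgebra B] {E : HilbMod B}
  {S T : Submodule ℂ (E.carrier × E.carrier)} {J : ℝ → E.carrier →L[ℂ] E.carrier} {c : ℝ}

lemma coe_sumSub : (sumSub S T : Set (E.carrier × E.carrier)) = sumGraph E E S T := by
  ext p
  constructor
  · rintro ⟨v, ⟨hS, hT⟩, rfl⟩
    exact ⟨_, _, hS, hT, rfl⟩
  · rintro ⟨y, z, hy, hz, hp⟩
    exact ⟨(p.1, y, z), ⟨hy, hz⟩, Prod.ext rfl hp.symm⟩

lemma gdom_sumGraph {F : HilbMod B} (GS GT : Set (E.carrier × F.carrier)) :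
    gdom (sumGraph E F GS GT) = gdom GS ∩ gdom GT := by
  ext x
  constructor
  · rintro ⟨p, ⟨y, z, hy, hz, -⟩, rfl⟩
    exact ⟨⟨_, hy, rfl⟩, ⟨_, hz, rfl⟩⟩
  · rintro ⟨⟨p, hp, rfl⟩, q, hq, hqp⟩
    exact ⟨(p.1, p.2 + q.2), ⟨_, _, hp, hqp ▸ hq, rfl⟩, rfl⟩

lemma isFormalAdjoint_of_isSymmetricGraph (hS : IsSymmetricGraph E S) :
    IsFormalAdjoint E.innerL S S :=
  fun p hp _ hq => hS hq p hp

lemma isOperatorGraph_sumSub (hS : IsOperatorGraph E E S) (hT : IsOperatorGraph E E T) :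
    IsOperatorGraph E E (sumSub S T) := by
  refine ⟨⟨_, rfl⟩, ?_, ?_⟩
  · rintro _ ⟨v, ⟨hvS, hvT⟩, rfl⟩ b
    exact ⟨(E.smulB v.1 b, E.smulB v.2.1 b, E.smulB v.2.2 b), ⟨hS.2.1 _ hvS b, hT.2.1 _ hvT b⟩,
      Prod.ext rfl (E.add_smulB _ _ _).symm⟩
  · rintro y ⟨⟨x, s, t⟩, ⟨hs, ht⟩, hv⟩
    obtain ⟨rfl, hy⟩ := Prod.ext_iff.1 hv
    refine hy.symm.trans (?_ : s + t = 0)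
    rw [hS.2.2 s hs, hT.2.2 t ht, add_zero]

lemma isFormalAdjoint_closure_sumSub (hS : IsFormalAdjoint E.innerL S S) :
    IsFormalAdjoint E.innerL (sumSub S T) (sumSub S (adjSub T)).topologicalClosure :=
  fun p hp _ hq => (sumSub S (adjSub T)).topologicalClosure_minimal
    (t := adjSub (sumSub S T)) (fun q hq p hp => hS.sumSub isFormalAdjoint_adjSub p hp q hq)
    (isClosed_adjointGraph _) hq p hp

lemma shiftRange_offdiag_closure_sumSub_eq_top (hJ : IsYosida S J)
    (hS : IsFormalAdjoint E.innerL S S) (hdense : Dense (gdom (S : Set (E.carrier × E.carrier))))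
    (hTreg : IsRegular E E T) (hT : WeaklyAnticommutes S T J c)
    (hT' : WeaklyAnticommutes S (adjSub T) J c) (hc : 0 ≤ c)
    (hclosed : IsClosed (sumSub S T : Set (E.carrier × E.carrier))) {μ : ℝ} (hμ : μ ≠ 0) :
    shiftRange μ (offdiag (sumSub S T) (sumSub S (adjSub T)).topologicalClosure) = ⊤ :=
  shiftRange_eq_top_of_offdiag_sumSub_le isDefinite_innerL isDefinite_pairForm_innerL hJ hS hdense
    isFormalAdjoint_adjSub hTreg.1.2.1 (isClosed_adjointGraph _)
    (fun _ => shiftRange_offdiag_adjSub_eq_top hTreg) hT hT' hc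
    (isClosed_offdiag hclosed (Submodule.isClosed_topologicalClosure _))
    ((isFormalAdjoint_closure_sumSub hS).offdiag isDefinite_innerL)
    (fun _ hp => ⟨hp.1, Submodule.le_topologicalClosure _ hp.2⟩) hμ

lemma exists_weaklyAnticommutes {T' : Submodule ℂ (E.carrier × E.carrier)}
    (hSsa : IsSelfAdjointGraph E S) (hSreg : IsRegular E E S) {R R' : E.carrier →L[ℂ] E.carrier}
    (hR : IsAnticommutatorExtension (S : Set (E.carrier × E.carrier)) T R)
    (hR' : IsAnticommutatorExtension (S : Set (E.carrier × E.carrier)) T' R') :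
    ∃ J c, IsYosida S J ∧ 0 ≤ c ∧ WeaklyAnticommutes S T J c ∧ WeaklyAnticommutes S T' J c := by
  have hb : ShiftBounded 1 S := fun p hp μ =>
    (isDefinite_innerL.shiftBounded (isFormalAdjoint_of_isSymmetricGraph hSsa.ge) p hp μ).trans
      (mul_le_mul_of_nonneg_right E.norm_innerL_le (norm_nonneg _))
  obtain ⟨J, hJ⟩ := exists_isYosida hb fun _ => shiftRange_eq_top_of_isSelfAdjointGraph hSsa hSreg
  exact ⟨J, max (3 * ‖R‖) (3 * ‖R'‖), hJ, by positivity,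
    (hJ.weaklyAnticommutes hR).mono (le_max_left _ _),
    (hJ.weaklyAnticommutes hR').mono (le_max_right _ _)⟩

end Assembly

theorem sum_selfadjoint_symmetric_regular_general {B : Type} [NonUnitalCStarAlgebra B]
    (E : HilbMod B) (GS GT : Set (E.carrier × E.carrier)) (hSsa : IsSelfAdjointGraph E GS)
    (hSreg : IsRegular E E GS) (hTsym : IsSymmetricGraph E GT) (hTreg : IsRegular E E GT)
    {R R' : E.carrier →L[ℂ] E.carrier} (hR : IsAnticommutatorExtension GS GT R)
    (hR' : IsAnticommutatorExtension GS (adjointGraph E E GT) R') :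
    IsClosed (sumGraph E E GS GT) ∧
    IsSymmetricGraph E (sumGraph E E GS GT) ∧
    IsRegular E E (sumGraph E E GS GT) ∧
    gdom (sumGraph E E GS GT) = gdom GS ∩ gdom GT ∧
    adjointGraph E E (sumGraph E E GS GT)
      = closure (sumGraph E E GS (adjointGraph E E GT)) := by
  obtain ⟨S, rfl⟩ := hSreg.1.1.1
  obtain ⟨T, rfl⟩ := hTreg.1.1.1
  have hS : IsFormalAdjoint E.innerL S S := isFormalAdjoint_of_isSymmetricGraph hSsa.ge
  have hT : IsFormalAdjoint E.innerL T T := isFormalAdjoint_of_isSymmetricGraph hTsym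
  obtain ⟨J, c, hJ, hc, hST, hST'⟩ := exists_weaklyAnticommutes (T' := adjSub T) hSsa hSreg hR hR'
  have hclosed : IsClosed (sumSub S T : Set (E.carrier × E.carrier)) :=
    isClosed_sumSub isDefinite_pairForm_innerL hJ hS hSreg.1.2.2.1 hT hST hc hSreg.1.2.1
      hTreg.1.2.1
  have hsymm : IsSymmetricGraph E (sumSub S T) := fun q hq p hp => hS.sumSub hT p hp q hq
  have htop {μ : ℝ} (hμ : μ ≠ 0) :=
    shiftRange_offdiag_closure_sumSub_eq_top hJ hS hSreg.1.2.2.1 hTreg hST hST' hc hclosed hμ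
  have hadj : adjSub (sumSub S T) = (sumSub S (adjSub T)).topologicalClosure :=
    adjSub_eq_of_shiftRange_offdiag (isFormalAdjoint_closure_sumSub hS) fun _ => htop
  have hdense : Dense (gdom (sumSub S T : Set (E.carrier × E.carrier))) :=
    hST.dense_image_fst_sumSub hJ hSreg.1.2.2.1 hTreg.1.2.2.1
  have hreg : IsRegular E E (sumSub S T) :=
    ⟨⟨isOperatorGraph_sumSub hSreg.1.1 hTreg.1.1, hclosed, hdense,
      hdense.mono (Set.image_mono hsymm)⟩,
      fun w => subset_closure (exists_add_eq_of_shiftRange_offdiag (hadj ▸ htop one_ne_zero) w)⟩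
  rw [gdom_sumGraph, ← coe_adjSub (G := T), ← coe_sumSub, ← coe_sumSub,
    ← Submodule.topologicalClosure_coe, ← hadj]
  exact ⟨hclosed, hsymm, hreg, rfl, rfl⟩

/-- **Theorem (Kaad–Lesch type sum theorem; Theorem 2.3 of the paper).**
Let `S` be a self-adjoint regular operator and `T` a symmetric regular operator on a
Hilbert `B`-module `E`.  Assume, for every `μ ∈ ℝ \ {0}`:
(1) `(S+iμ)⁻¹ Dom T ⊆ Dom S ∩ Dom T ∩ Dom (ST)` and `(ST+TS)(S+iμ)⁻¹` extends to a
bounded adjointable operator on `E`;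
(2) the same with `T` replaced by `T*`.
Then `S + T` is a closed regular symmetric operator with domain `Dom S ∩ Dom T`, and
`(S+T)*` is the closure of `S + T*` with domain `Dom S ∩ Dom T*`.

Here operators are represented by their graphs; `(y, w) ∈ GS` means `w = S y`, and the
element `(S + iμ)⁻¹ x` is represented by the `y` with `(y, w) ∈ GS` and `w + iμ y = x`. -/
theorem sum_selfadjoint_symmetric_regular
    {B : Type} [NonUnitalCStarAlgebra B] (E : HilbMod B)
    (GS GT : Set (E.carrier × E.carrier))
    (hSsa : IsSelfAdjointGraph E GS) (hSreg : IsRegular E E GS)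
    (hTsym : IsSymmetricGraph E GT) (hTreg : IsRegular E E GT)
    -- condition (1): domain mapping
    (h1 : ∀ μ : ℝ, μ ≠ 0 → ∀ x ∈ gdom GT, ∀ y w, (y, w) ∈ GS →
      w + ((μ : ℂ) * Complex.I) • y = x →
      y ∈ gdom GT ∧ ∀ ty, (y, ty) ∈ GT → ty ∈ gdom GS)
    -- condition (1): bounded adjointable extension of `(ST+TS)(S+iμ)⁻¹`
    (h1' : ∀ μ : ℝ, μ ≠ 0 → ∃ R : Adj E E, ∀ x ∈ gdom GT, ∀ y w, (y, w) ∈ GS →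
      w + ((μ : ℂ) * Complex.I) • y = x →
      ∀ ty sty tw, (y, ty) ∈ GT → (ty, sty) ∈ GS → (w, tw) ∈ GT →
        R.toFun x = sty + tw)
    -- condition (2): domain mapping
    (h2 : ∀ μ : ℝ, μ ≠ 0 → ∀ x ∈ gdom (adjointGraph E E GT), ∀ y w, (y, w) ∈ GS →
      w + ((μ : ℂ) * Complex.I) • y = x →
      y ∈ gdom (adjointGraph E E GT) ∧
        ∀ ty, (y, ty) ∈ adjointGraph E E GT → ty ∈ gdom GS)
    -- condition (2): bounded adjointable extension of `(ST*+T*S)(S+iμ)⁻¹`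
    (h2' : ∀ μ : ℝ, μ ≠ 0 → ∃ R : Adj E E, ∀ x ∈ gdom (adjointGraph E E GT), ∀ y w,
      (y, w) ∈ GS → w + ((μ : ℂ) * Complex.I) • y = x →
      ∀ ty sty tw, (y, ty) ∈ adjointGraph E E GT → (ty, sty) ∈ GS →
        (w, tw) ∈ adjointGraph E E GT →
        R.toFun x = sty + tw) :
    IsClosed (sumGraph E E GS GT) ∧
    IsSymmetricGraph E (sumGraph E E GS GT) ∧
    IsRegular E E (sumGraph E E GS GT) ∧
    gdom (sumGraph E E GS GT) = gdom GS ∩ gdom GT ∧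
    adjointGraph E E (sumGraph E E GS GT)
      = closure (sumGraph E E GS (adjointGraph E E GT)) := by
  obtain ⟨R, hR⟩ := h1' 1 one_ne_zero
  obtain ⟨R', hR'⟩ := h2' 1 one_ne_zero
  exact sum_selfadjoint_symmetric_regular_general E GS GT hSsa hSreg hTsym hTreg
    ⟨h1, by simpa only [gdom, Complex.ofReal_one, one_mul] using hR⟩
    ⟨h2, by simpa only [gdom, Complex.ofReal_one, one_mul] using hR'⟩

end UKK
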